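/- Yang-Baxter relation for the elliptic 6j-symbols: let k, l ≥ 1 be integers and let a, b, c, e, f, g ∈ ℤ with a−b ≡ f−e ≡ k (mod 2), |a−b| ≤ k, |f−e| ≤ k, b−c ≡ g−f ≡ l (mod 2), |b−c| ≤ l, |g−f| ≤ l, and all of a, b, c, e, f, g > 2(k+l); assume r is irrational and u, v ∈ ℂ are such that every bracket appearing in a denominator of any nonzero summand is nonzero. Then Σ_{d ∈ ℤ} W^{(k,l)}(a,b;d,c | u−v) · L^{(k)}(d,c;f,e | u) · L^{(l)}(a,d;g,f | v) = Σ_{d ∈ ℤ} L^{(k)}(a,b;g,d | u) · L^{(l)}(b,c;d,e | v) · W^{(k,l)}(g,d;f,e | u−v), both sums having finitely many nonzero terms. -/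

import Mathlib

noncomputable section

open Complex Finset

namespace Ell

/-- `x^s = exp(-iπ s /(r τ))`. -/
def xp (τ : ℂ) (r : ℝ) (s : ℂ) : ℂ :=
  Complex.exp (-Complex.I * (Real.pi : ℂ) * s / ((r : ℂ) * τ))

/-- `Θ_p(z) = ∏_{j ≥ 0} (1 - z p^j)(1 - p^{j+1}/z)(1 - p^{j+1})`. -/
def Theta (p z : ℂ) : ℂ :=
  ∏' j : ℕ, ((1 - z * p ^ j) * (1 - p ^ (j + 1) / z) * (1 - p ^ (j + 1)))

/-- The bracket `[u] = x^{u²/r - u} Θ_p(x^{2u})` with `p = x^{2r}`. -/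
def br (τ : ℂ) (r : ℝ) (u : ℂ) : ℂ :=
  xp τ r (u ^ 2 / (r : ℂ) - u) * Theta (xp τ r (2 * (r : ℂ))) (xp τ r (2 * u))

/-- Elliptic shifted factorial `[u]_n = ∏_{j=0}^{n-1} [u+j]`. -/
def brF (τ : ℂ) (r : ℝ) (u : ℂ) (n : ℕ) : ℂ :=
  ∏ j ∈ Finset.range n, br τ r (u + (j : ℂ))

/-- Elliptic binomial coefficient `C_n^k(α,β,γ)`. -/
def Cnk (τ : ℂ) (r : ℝ) (k n : ℕ) (α β γ : ℂ) : ℂ :=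
  brF τ r 1 k / (brF τ r 1 n * brF τ r 1 (k - n)) *
    (brF τ r (α - γ) n * brF τ r (α + γ + (k : ℂ) - (n : ℂ)) n *
      brF τ r (α - β) (k - n) * brF τ r (α + β + (n : ℂ)) (k - n)) /
    (brF τ r (β - γ + (n : ℂ) - (k : ℂ)) n * brF τ r (γ - β - (n : ℂ)) (k - n) *
      brF τ r (β + γ) k)

/-- The elliptic 6j-symbol `R_n^m(α,β,γ,δ;k)`. -/
def Rnm (τ : ℂ) (r : ℝ) (k n m : ℕ) (α β γ δ : ℂ) : ℂ :=
  ∑ j ∈ Finset.range (min n m + 1),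
    Cnk τ r n j α γ (β + (k : ℂ) - (n : ℂ)) * Cnk τ r (k - j) (m - j) β (γ + (j : ℂ)) δ

/-- Terminating very-well-poised elliptic hypergeometric sum with explicit
truncation `N`:  `Σ_{j=0}^N ([u₀+2j]/[u₀]) ([u₀]_j/[1]_j) ∏ᵢ [uᵢ]_j/[u₀+1-uᵢ]_j`. -/
def Vsum (τ : ℂ) (r : ℝ) (u₀ : ℂ) (us : List ℂ) (N : ℕ) : ℂ :=
  ∑ j ∈ Finset.range (N + 1),
    br τ r (u₀ + 2 * (j : ℂ)) / br τ r u₀ * (brF τ r u₀ j / brF τ r 1 j) *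
      (us.map fun ui => brF τ r ui j / brF τ r (u₀ + 1 - ui) j).prod

/-- "Every bracket appearing in a denominator of `C_n^k(·,β,γ)` is nonzero". -/
def CdenomNZ (τ : ℂ) (r : ℝ) (k n : ℕ) (β γ : ℂ) : Prop :=
  brF τ r 1 n ≠ 0 ∧ brF τ r 1 (k - n) ≠ 0 ∧
    brF τ r (β - γ + (n : ℂ) - (k : ℂ)) n ≠ 0 ∧
    brF τ r (γ - β - (n : ℂ)) (k - n) ≠ 0 ∧ brF τ r (β + γ) k ≠ 0

/-- "Every bracket appearing in a denominator of `R_n^m(α,β,γ,δ;k)` is nonzero". -/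
def RdenomNZ (τ : ℂ) (r : ℝ) (k n m : ℕ) (β γ δ : ℂ) : Prop :=
  ∀ j ≤ min n m,
    CdenomNZ τ r n j γ (β + (k : ℂ) - (n : ℂ)) ∧
      CdenomNZ τ r (k - j) (m - j) (γ + (j : ℂ)) δ

/-- Jacobi theta `ϑ₁(v|σ)`. -/
def th1 (v σ : ℂ) : ℂ :=
  2 * Complex.exp (2 * (Real.pi : ℂ) * Complex.I * σ / 8) *
    (∏' n : ℕ, (1 - Complex.exp (2 * (Real.pi : ℂ) * Complex.I * σ) ^ (n + 1))) *
    Complex.sin ((Real.pi : ℂ) * v) *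
    ∏' n : ℕ,
      (1 - 2 * Complex.exp (2 * (Real.pi : ℂ) * Complex.I * σ) ^ (n + 1) *
            Complex.cos (2 * (Real.pi : ℂ) * v) +
        Complex.exp (2 * (Real.pi : ℂ) * Complex.I * σ) ^ (2 * (n + 1)))

/-- Jacobi theta `ϑ₀(v|σ)`. -/
def th0 (v σ : ℂ) : ℂ :=
  -Complex.I * Complex.exp ((Real.pi : ℂ) * Complex.I * (v + σ / 4)) * th1 (v + σ / 2) σ

/-- Jacobi theta `ϑ₂(v|σ)`. -/
def th2 (v σ : ℂ) : ℂ := th1 (v + 1 / 2) σ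

/-- Jacobi theta `ϑ₃(v|σ)`. -/
def th3 (v σ : ℂ) : ℂ :=
  Complex.exp ((Real.pi : ℂ) * Complex.I * (v + σ / 4)) * th1 (v + (σ + 1) / 2) σ

/-- Intertwining vector component `ψ_ε(u)^a_b`, `ε ∈ {1, -1}`. -/
def psi (τ : ℂ) (r : ℝ) (u : ℂ) (ε : ℤ) (a b : ℤ) : ℂ :=
  if ε = 1 then th0 ((((a : ℂ) - (b : ℂ)) * u + (a : ℂ)) / (2 * (r : ℂ))) (τ / 2)
  else th3 ((((a : ℂ) - (b : ℂ)) * u + (a : ℂ)) / (2 * (r : ℂ))) (τ / 2)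

/-- The constant `C = x^{-r/4} e^{-iπ/4} τ^{1/2}`. -/
def Cc (τ : ℂ) (r : ℝ) : ℂ :=
  xp τ r (-(r : ℂ) / 4) * Complex.exp (-(Real.pi : ℂ) * Complex.I / 4) * τ ^ (1 / 2 : ℂ)

/-- Dual intertwining vector component `ψ*_ε(u)^a_b = -ε(a-b) C² ψ_{-ε}(u-1)^a_b/(2[b][u])`. -/
def psiStar (τ : ℂ) (r : ℝ) (u : ℂ) (ε : ℤ) (a b : ℤ) : ℂ :=
  -(ε : ℂ) * ((a : ℂ) - (b : ℂ)) * Cc τ r ^ 2 * psi τ r (u - 1) (-ε) a b /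
    (2 * br τ r (b : ℂ) * br τ r u)

/-- Sign attached to a boolean. -/
def sg (b : Bool) : ℤ := if b then 1 else -1

/-- Canonical path from `a`: up for `j ≤ n`, down afterwards. -/
def cpathZ (a n : ℤ) (j : ℕ) : ℤ := if (j : ℤ) ≤ n then a + j else a + 2 * n - j

/-- Admissibility: `a - b ∈ {-k, -k+2, …, k}`. -/
def adm (k : ℕ) (a b : ℤ) : Prop := (a - b).natAbs ≤ k ∧ (a - b - (k : ℤ)) % 2 = 0

instance (k : ℕ) (a b : ℤ) : Decidable (adm k a b) := by unfold adm; infer_instance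

/-- Fused intertwining vector component `ψ^{(k)}_μ(u)^a_b` (zero if `a,b` not admissible). -/
def psiF (τ : ℂ) (r : ℝ) (k : ℕ) (μ : ℤ) (u : ℂ) (a b : ℤ) : ℂ :=
  if adm k a b then
    ∑ ε ∈ Finset.univ.filter fun ε : Fin k → Bool => (∑ j, sg (ε j)) = μ,
      ∏ j : Fin k,
        psi τ r (u + (k : ℂ) - (((j : ℕ) + 1 : ℕ) : ℂ)) (sg (ε j))
          (cpathZ a (((k : ℤ) - (a - b)) / 2) (j : ℕ))
          (cpathZ a (((k : ℤ) - (a - b)) / 2) ((j : ℕ) + 1))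
  else 0

/-- Partial-sum path attached to a sign sequence `δ`, starting at `a`. -/
def spath (k : ℕ) (a : ℤ) (δ : Fin k → Bool) (j : ℕ) : ℤ :=
  a + ∑ i ∈ Finset.range j, if h : i < k then sg (δ ⟨i, h⟩) else 0

/-- Fused dual intertwining vector component `ψ*^{(k)}_μ(u)^b_a`
(sum over all admissible paths from `a` to `b`; zero if not admissible). -/
def psiStarF (τ : ℂ) (r : ℝ) (k : ℕ) (μ : ℤ) (u : ℂ) (b a : ℤ) : ℂ :=
  if adm k a b then
    ∑ δ ∈ Finset.univ.filter fun δ : Fin k → Bool => (∑ j, sg (δ j)) = b - a,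
      ∏ j : Fin k,
        psiStar τ r (u + (k : ℂ) - (((j : ℕ) + 1 : ℕ) : ℂ))
          (if ((j : ℕ) + 1 : ℤ) ≤ ((k : ℤ) + μ) / 2 then 1 else -1)
          (spath k a δ ((j : ℕ) + 1)) (spath k a δ (j : ℕ))
  else 0

/-- The `L`-matrix `L^{(k)}(a,b;c,d|u) = Σ_μ ψ*^{(k)}_μ(u)^d_c ψ^{(k)}_μ(u)^a_b`. -/
def Lk (τ : ℂ) (r : ℝ) (k : ℕ) (u : ℂ) (a b c d : ℤ) : ℂ :=
  ∑ i ∈ Finset.range (k + 1),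
    psiStarF τ r k ((k : ℤ) - 2 * (i : ℤ)) u d c * psiF τ r k ((k : ℤ) - 2 * (i : ℤ)) u a b

/-- Normalized face weight `W̄(a,b;d,c|u)` (arguments ordered (NW, NE; SW, SE)). -/
def Wb (τ : ℂ) (r : ℝ) (u : ℂ) (a b d c : ℤ) : ℂ :=
  if b = a + 1 ∧ d = a + 1 ∧ c = a + 2 then 1
  else if b = a - 1 ∧ d = a - 1 ∧ c = a - 2 then 1
  else if b = a + 1 ∧ d = a + 1 ∧ c = a then
    br τ r ((a : ℂ) - u) * br τ r 1 / (br τ r (a : ℂ) * br τ r (1 + u))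
  else if b = a - 1 ∧ d = a - 1 ∧ c = a then
    br τ r ((a : ℂ) + u) * br τ r 1 / (br τ r (a : ℂ) * br τ r (1 + u))
  else if b = a + 1 ∧ d = a - 1 ∧ c = a then
    br τ r ((a : ℂ) + 1) * br τ r u / (br τ r (a : ℂ) * br τ r (1 + u))
  else if b = a - 1 ∧ d = a + 1 ∧ c = a then
    br τ r ((a : ℂ) - 1) * br τ r u / (br τ r (a : ℂ) * br τ r (1 + u))
  else 0

/-- Sequence with prescribed endpoints `d`, `c` and free interior values `f`. -/
def seqI (k : ℕ) (d c : ℤ) (f : Fin (k - 1) → ℤ) (j : ℕ) : ℤ :=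
  if h0 : j = 0 then d
  else if hj : j < k then f ⟨j - 1, by omega⟩ else c

/-- Fused face weight `W^{(k,1)}(a,b;d,c|u)`. -/
def Wk1 (τ : ℂ) (r : ℝ) (k : ℕ) (u : ℂ) (a b d c : ℤ) : ℂ :=
  if adm k a b then
    ∑' f : Fin (k - 1) → ℤ,
      ∏ j ∈ Finset.range k,
        Wb τ r (u + (k : ℂ) - ((j : ℂ) + 1))
          (cpathZ a (((k : ℤ) - (a - b)) / 2) j)
          (cpathZ a (((k : ℤ) - (a - b)) / 2) (j + 1))
          (seqI k d c f j) (seqI k d c f (j + 1))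
  else 0

/-- Fused face weight `W^{(k,l)}(a,b;d,c|u)`. -/
def Wkl (τ : ℂ) (r : ℝ) (k l : ℕ) (u : ℂ) (a b d c : ℤ) : ℂ :=
  if adm l b c then
    ∑' g : Fin (l - 1) → ℤ,
      ∏ i ∈ Finset.range l,
        Wk1 τ r k (u - (l : ℂ) + ((i : ℂ) + 1))
          (seqI l a d g i) (cpathZ b (((l : ℤ) - (b - c)) / 2) i)
          (seqI l a d g (i + 1)) (cpathZ b (((l : ℤ) - (b - c)) / 2) (i + 1))
  else 0

/-- Eight-vertex weight `ā(u)`. -/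
def aw (τ : ℂ) (r : ℝ) (u : ℂ) : ℂ :=
  th2 (1 / (2 * (r : ℂ))) (τ / 2) * th2 (u / (2 * (r : ℂ))) (τ / 2) /
    (th2 0 (τ / 2) * th2 ((1 + u) / (2 * (r : ℂ))) (τ / 2))

/-- Eight-vertex weight `b̄(u)`. -/
def bw (τ : ℂ) (r : ℝ) (u : ℂ) : ℂ :=
  th2 (1 / (2 * (r : ℂ))) (τ / 2) * th1 (u / (2 * (r : ℂ))) (τ / 2) /
    (th2 0 (τ / 2) * th1 ((1 + u) / (2 * (r : ℂ))) (τ / 2))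

/-- Eight-vertex weight `c̄(u)`. -/
def cw (τ : ℂ) (r : ℝ) (u : ℂ) : ℂ :=
  th1 (1 / (2 * (r : ℂ))) (τ / 2) * th2 (u / (2 * (r : ℂ))) (τ / 2) /
    (th2 0 (τ / 2) * th1 ((1 + u) / (2 * (r : ℂ))) (τ / 2))

/-- Eight-vertex weight `d̄(u)`. -/
def dw (τ : ℂ) (r : ℝ) (u : ℂ) : ℂ :=
  -(th1 (1 / (2 * (r : ℂ))) (τ / 2) * th1 (u / (2 * (r : ℂ))) (τ / 2)) /
    (th2 0 (τ / 2) * th2 ((1 + u) / (2 * (r : ℂ))) (τ / 2))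

/-- The normalized eight-vertex `R`-matrix entry `R̄(u)_{(ε₁,ε₂),(ε₁',ε₂')}`. -/
def Rbar (τ : ℂ) (r : ℝ) (u : ℂ) (e1 e2 e1' e2' : ℤ) : ℂ :=
  if e1' = e1 ∧ e2' = e2 ∧ e1 = e2 then aw τ r u
  else if e1' = e1 ∧ e2' = e2 ∧ e1 = -e2 then bw τ r u
  else if e1' = e2 ∧ e2' = e1 ∧ e1 = -e2 then cw τ r u
  else if e1' = -e1 ∧ e2' = -e2 ∧ e1 = e2 then dw τ r u
  else 0

/-- Sklyanin standard-basis vector `v_+(z)`. -/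
def vp (τ z : ℂ) : ℂ := th3 (2 * z) (2 * τ) - th2 (2 * z) (2 * τ)

/-- Sklyanin standard-basis vector `v_-(z)`. -/
def vm (τ z : ℂ) : ℂ := th3 (2 * z) (2 * τ) + th2 (2 * z) (2 * τ)



section
def ok (M : ℤ) (n : ℕ) (h : ℤ) : Prop := (n : ℤ) < h ∧ h + n < M

def Adj (a b : ℤ) : Prop := b = a + 1 ∨ b = a - 1

instance (a b : ℤ) : Decidable (Adj a b) := by unfold Adj; infer_instance

def nx (n : ℕ) (a b : ℤ) : ℤ := if adm n (a + 1) b then a + 1 else a - 1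

abbrev Wt := ℂ → ℤ → ℤ → ℤ → ℤ → ℂ

def Fu (M : ℤ) (X : Wt) (u : ℂ) : ℕ → ℤ → ℤ → ℤ → ℤ → ℂ
  | 0, a, b, d, c => if a = b ∧ d = c then 1 else 0
  | n + 1, a, b, d, c => if adm (n + 1) a b then
      ∑ d1 ∈ Finset.Ioo 0 M, X (u + n) a (nx n a b) d d1 * Fu M X u n (nx n a b) b d1 c
    else 0

def BA (X : Wt) : Prop := ∀ w a b d c, ¬ Adj d c → X w a b d c = 0

def Ex (M : ℤ) (m : ℕ) (X : Wt) : Prop := ∀ w a d c, ok M m a → ok M m d →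
  ∑ d1 ∈ Finset.Ioo 0 M, X (w + 1) a (a + 1) d d1 * X w (a + 1) a d1 c =
  ∑ d1 ∈ Finset.Ioo 0 M, X (w + 1) a (a - 1) d d1 * X w (a - 1) a d1 c

lemma nx_adj (n : ℕ) (a b : ℤ) : Adj a (nx n a b) := by
  unfold nx Adj; split_ifs <;> simp

lemma nx_adm (n : ℕ) (a b : ℤ) (h : adm (n + 1) a b) : adm n (nx n a b) b := by
  unfold nx; split_ifs with h1
  · exact h1
  · unfold adm at *; push_cast at *; omega

lemma Fu_top {M : ℤ} {X : Wt} {u : ℂ} {n : ℕ} {a b d c : ℤ} (h : ¬ adm n a b) :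
    Fu M X u n a b d c = 0 := by
  cases n with
  | zero => 
    simp only [Fu]; rw [if_neg]; rintro ⟨rfl, rfl⟩; apply h; simp [adm]
  | succ n => simp only [Fu]; rw [if_neg h]

lemma Fu_bot {M : ℤ} {X : Wt} (hX : BA X) {u : ℂ} {n : ℕ} {a b d c : ℤ} (h : ¬ adm n d c) :
    Fu M X u n a b d c = 0 := by
  induction n generalizing a d with
  | zero => 
    simp only [Fu]; rw [if_neg]; rintro ⟨rfl, rfl⟩; apply h; simp [adm]
  | succ n ih =>
    simp only [Fu]; split_ifs with h1
    · apply Finset.sum_eq_zero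
      intro d1 _
      by_cases hd : Adj d d1
      · rw [ih, mul_zero]
        intro h2; apply h; unfold adm Adj at *; push_cast at *; omega
      · rw [hX _ _ _ _ _ hd, zero_mul]
    · rfl

lemma adm_succ {n : ℕ} {a a1 b : ℤ} (ha : Adj a a1) (h : adm n a1 b) : adm (n + 1) a b := by
  unfold adm Adj at *; push_cast at *; omega

lemma Fu_star {M : ℤ} {m : ℕ} {X : Wt} (hX : BA X) (hE : Ex M m X) (u : ℂ) (n : ℕ) :
    ∀ (a b d c a1 : ℤ), Adj a a1 → adm n a1 b → ok M (n + m) a → ok M (n + m) d →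
    Fu M X u (n + 1) a b d c =
      ∑ d1 ∈ Finset.Ioo 0 M, X (u + n) a a1 d d1 * Fu M X u n a1 b d1 c := by
  induction n with
  | zero => 
    intro a b d c a1 h1 h2 _ _
    have : nx 0 a b = a1 := by
      unfold nx; unfold adm Adj at *; split_ifs <;> omega
    rw [Fu, if_pos (adm_succ h1 h2), this]
  | succ n ih =>
    have key : ∀ (a b d c : ℤ), adm (n + 1) (a + 1) b → adm (n + 1) (a - 1) b →
        ok M (n + 1 + m) a → ok M (n + 1 + m) d →
        ∑ d1 ∈ Finset.Ioo 0 M, X (u + (n + 1 : ℕ)) a (a + 1) d d1 * Fu M X u (n + 1) (a + 1) b d1 c =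
        ∑ d1 ∈ Finset.Ioo 0 M, X (u + (n + 1 : ℕ)) a (a - 1) d d1 * Fu M X u (n + 1) (a - 1) b d1 c := by
      intro a b d c h1 h2 ha hd
      have hab : adm n a b := by unfold adm at *; push_cast at *; omega
      have go : ∀ a1, Adj a a1 → ∑ d1 ∈ Finset.Ioo 0 M,
          X (u + (n + 1 : ℕ)) a a1 d d1 * Fu M X u (n + 1) a1 b d1 c =
          ∑ d2 ∈ Finset.Ioo 0 M, (∑ d1 ∈ Finset.Ioo 0 M, X (u + n + 1) a a1 d d1 * X (u + n) a1 a d1 d2) *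
            Fu M X u n a b d2 c := by
        intro a1 h
        simp_rw [Finset.sum_mul]
        rw [Finset.sum_comm]
        apply Finset.sum_congr rfl
        intro d1 _
        by_cases hd1 : Adj d d1
        · rw [ih a1 b d1 c a (by unfold Adj at *; omega) hab
            (by unfold Adj ok at *; push_cast at *; omega) (by unfold Adj ok at *; push_cast at *; omega),
            Finset.mul_sum]
          apply Finset.sum_congr rfl
          intro d2 _
          push_cast
          rw [← add_assoc]; ring
        · rw [hX _ _ _ _ _ hd1]; simp [hX _ _ _ _ _ hd1]
      rw [go _ (Or.inl rfl), go _ (Or.inr rfl)]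
      apply Finset.sum_congr rfl
      intro d2 _
      rw [hE _ _ _ _ (by unfold ok at *; push_cast at *; omega) (by unfold ok at *; push_cast at *; omega)]
    intro a b d c a1 h1 h2 ha hd
    rw [Fu, if_pos (adm_succ h1 h2)]
    unfold nx
    split_ifs with h3
    · rcases h1 with rfl | rfl
      · rfl
      · exact key _ _ _ _ h3 h2 ha hd
    · rcases h1 with rfl | rfl
      · exact absurd h2 h3
      · rfl

/-- One-dimensional fusion of a Yang--Baxter type exchange relation. -/
lemma fuse {M : ℤ} {m mX mZ N : ℕ} {X Z : Wt} {V : ℤ → ℤ → ℤ → ℤ → ℂ}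
    (hX : BA X) (hZ : BA Z) (eX : Ex M mX X) (eZ : Ex M mZ Z)
    (hN : N + mZ ≤ m + 1) (hN2 : N + mX ≤ m + 1) (hmX : mX ≤ m) (hmZ : mZ ≤ m)
    (hV : ∀ t m1 m2 b, V t m1 m2 b ≠ 0 → (m1 - t).natAbs ≤ N ∨ (m1 - b).natAbs ≤ N)
    (hR : ∀ w a b g f c e, Adj a b → ok M m a → ok M m g → ok M m f →
      ∑ d ∈ Finset.Ioo 0 M, V a d g f * X w a b d c * Z w d c f e =
      ∑ d ∈ Finset.Ioo 0 M, Z w a b g d * X w g d f e * V b c d e) (u : ℂ) (n : ℕ) :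
    ∀ a b g f c e, ok M (n + m) a → ok M (n + m) g → ok M (n + m) f →
      (g ∈ Finset.Ioo 0 M) → (c ∈ Finset.Ioo 0 M) →
      ∑ d ∈ Finset.Ioo 0 M, V a d g f * Fu M X u n a b d c * Fu M Z u n d c f e =
      ∑ d ∈ Finset.Ioo 0 M, Fu M Z u n a b g d * Fu M X u n g d f e * V b c d e := by
  induction n with
  | zero =>
    intro a b g f c e _ _ _ hg hc
    simp only [Fu]
    by_cases h1 : a = b
    · by_cases h2 : f = e
      · subst h1 h2
        rw [Finset.sum_eq_single c, Finset.sum_eq_single g]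
        · simp
        · intro d _ hd
          simp [hd.symm]
        · intro h; exact absurd hg h
        · intro d _ hd
          simp [hd]
        · intro h; exact absurd hc h
      · simp [h2]
    · simp [h1]
  | succ n ih =>
    intro a b g f c e ha hg hf hgS hcS
    by_cases hab : adm (n + 1) a b
    swap
    · simp [Fu_top hab]
    obtain ⟨a1, h1, h2⟩ : ∃ a1, Adj a a1 ∧ adm n a1 b := ⟨_, nx_adj _ _ _, nx_adm _ _ _ hab⟩
    have L : ∀ d ∈ Finset.Ioo 0 M, V a d g f * Fu M X u (n + 1) a b d c * Fu M Z u (n + 1) d c f e =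
        ∑ d1 ∈ Finset.Ioo 0 M, ∑ f1 ∈ Finset.Ioo 0 M,
          (V a d g f * X (u + n) a a1 d d1 * Z (u + n) d d1 f f1) *
          (Fu M X u n a1 b d1 c * Fu M Z u n d1 c f1 e) := by
      intro d _
      by_cases hv : V a d g f = 0
      · simp [hv]
      have hd : ok M (n + 1 + m - N) d ∧ N ≤ n + 1 + m := by
        have := hV _ _ _ _ hv
        unfold ok at *
        push_cast at *
        by_cases N ≤ n + 1 + m
        · rw [Nat.cast_sub (by omega)]; push_cast
          omega
        · omega
      rw [Fu_star hX eX u n a b d c a1 h1 h2 (by unfold ok at *; push_cast at *; omega)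
        (by unfold ok at *; push_cast at *; omega), Finset.mul_sum, Finset.sum_mul]
      apply Finset.sum_congr rfl
      intro d1 _
      by_cases hd1 : Adj d d1
      swap
      · simp [hX _ _ _ _ _ hd1]
      by_cases hd2 : adm n d1 c
      swap
      · simp [Fu_bot hX hd2]
      rw [Fu_star hZ eZ u n d c f e d1 hd1 hd2 (by unfold ok at *; push_cast at *; omega)
        (by unfold ok at *; push_cast at *; omega), Finset.mul_sum]
      apply Finset.sum_congr rfl
      intro f1 _
      ring
    rw [Finset.sum_congr rfl L, Finset.sum_comm]
    have L2 : ∀ d1 ∈ Finset.Ioo 0 M, ∑ d ∈ Finset.Ioo 0 M, ∑ f1 ∈ Finset.Ioo 0 M,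
          (V a d g f * X (u + n) a a1 d d1 * Z (u + n) d d1 f f1) *
          (Fu M X u n a1 b d1 c * Fu M Z u n d1 c f1 e) =
        ∑ f1 ∈ Finset.Ioo 0 M, ∑ g1 ∈ Finset.Ioo 0 M,
          (Z (u + n) a a1 g g1 * X (u + n) g g1 f f1) *
          (V a1 d1 g1 f1 * Fu M X u n a1 b d1 c * Fu M Z u n d1 c f1 e) := by
      intro d1 _
      rw [Finset.sum_comm]
      apply Finset.sum_congr rfl
      intro f1 _
      rw [← Finset.sum_mul, hR _ _ _ _ _ _ _ h1 (by unfold ok at *; push_cast at *; omega)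
        (by unfold ok at *; push_cast at *; omega) (by unfold ok at *; push_cast at *; omega),
        Finset.sum_mul]
      apply Finset.sum_congr rfl
      intro g1 _
      ring
    rw [Finset.sum_congr rfl L2, Finset.sum_comm]
    have L3 : ∀ f1 ∈ Finset.Ioo 0 M, ∑ d1 ∈ Finset.Ioo 0 M, ∑ g1 ∈ Finset.Ioo 0 M,
          (Z (u + n) a a1 g g1 * X (u + n) g g1 f f1) *
          (V a1 d1 g1 f1 * Fu M X u n a1 b d1 c * Fu M Z u n d1 c f1 e) =
        ∑ g1 ∈ Finset.Ioo 0 M, ∑ d ∈ Finset.Ioo 0 M,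
          (Z (u + n) a a1 g g1 * X (u + n) g g1 f f1) *
          (Fu M Z u n a1 b g1 d * Fu M X u n g1 d f1 e * V b c d e) := by
      intro f1 hf1
      rw [Finset.sum_comm]
      apply Finset.sum_congr rfl
      intro g1 hg1
      by_cases hgg : Adj g g1
      swap
      · simp [hZ _ _ _ _ _ hgg]
      by_cases hff : Adj f f1
      swap
      · simp [hX _ _ _ _ _ hff]
      rw [← Finset.mul_sum, ih _ _ _ _ _ _ (by unfold Adj ok at *; push_cast at *; omega)
        (by unfold Adj ok at *; push_cast at *; omega) (by unfold Adj ok at *; push_cast at *; omega) hg1 hcS,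
        Finset.mul_sum]
    rw [Finset.sum_congr rfl L3]
    have R : ∀ d ∈ Finset.Ioo 0 M, Fu M Z u (n + 1) a b g d * Fu M X u (n + 1) g d f e * V b c d e =
        ∑ g1 ∈ Finset.Ioo 0 M, ∑ f1 ∈ Finset.Ioo 0 M,
          (Z (u + n) a a1 g g1 * X (u + n) g g1 f f1) *
          (Fu M Z u n a1 b g1 d * Fu M X u n g1 d f1 e * V b c d e) := by
      intro d _
      rw [Fu_star hZ eZ u n a b g d a1 h1 h2 (by unfold ok at *; push_cast at *; omega)
        (by unfold ok at *; push_cast at *; omega), Finset.sum_mul, Finset.sum_mul]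
      apply Finset.sum_congr rfl
      intro g1 _
      by_cases hd1 : Adj g g1
      swap
      · simp [hZ _ _ _ _ _ hd1]
      by_cases hd2 : adm n g1 d
      swap
      · simp [Fu_bot hZ hd2]
      rw [Fu_star hX eX u n g d f e g1 hd1 hd2 (by unfold ok at *; push_cast at *; omega)
        (by unfold ok at *; push_cast at *; omega), Finset.mul_sum, Finset.sum_mul]
      apply Finset.sum_congr rfl
      intro f1 _
      ring
    rw [Finset.sum_congr rfl R]
    rw [Finset.sum_comm]
    rw [Finset.sum_comm (s := Finset.Ioo 0 M) (t := Finset.Ioo 0 M)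
      (f := fun d g1 => ∑ f1 ∈ Finset.Ioo 0 M,
          (Z (u + n) a a1 g g1 * X (u + n) g g1 f f1) *
          (Fu M Z u n a1 b g1 d * Fu M X u n g1 d f1 e * V b c d e))]
    apply Finset.sum_congr rfl
    intro g1 _
    rw [Finset.sum_comm]
end

section
def LRA (X : Wt) : Prop := ∀ w a b d c, ¬ (Adj a d ∧ Adj b c) → X w a b d c = 0

def RE (M : ℤ) (X : Wt) : Prop := ∀ w h0 h2 e, ok M 1 h0 →
  ∑ h1 ∈ Finset.Ioo 0 M, X w h0 e h1 (e + 1) * X (w + 1) h1 (e + 1) h2 e =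
  ∑ h1 ∈ Finset.Ioo 0 M, X w h0 e h1 (e - 1) * X (w + 1) h1 (e - 1) h2 e

lemma Fu_left {M : ℤ} {X : Wt} (hX : LRA X) {u : ℂ} {n : ℕ} {a b d c : ℤ} (hbc : Adj b c)
    (h : ¬ Adj a d) : Fu M X u n a b d c = 0 := by
  cases n with
  | zero => 
    simp only [Fu]; rw [if_neg]; rintro ⟨rfl, rfl⟩; exact h hbc
  | succ n =>
    simp only [Fu]; split_ifs with h1
    · apply Finset.sum_eq_zero
      intro d1 _
      rw [hX _ _ _ _ _ (fun hh => h hh.1), zero_mul]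
    · rfl

lemma Fu_left' {M : ℤ} {X : Wt} (hX : LRA X) {u : ℂ} {n : ℕ} (hn : 1 ≤ n) {a b d c : ℤ}
    (h : ¬ Adj a d) : Fu M X u n a b d c = 0 := by
  obtain ⟨n, rfl⟩ : ∃ k, n = k + 1 := ⟨n - 1, by omega⟩
  simp only [Fu]; split_ifs with h1
  · apply Finset.sum_eq_zero
    intro d1 _
    rw [hX _ _ _ _ _ (fun hh => h hh.1), zero_mul]
  · rfl

lemma vert {M : ℤ} {X : Wt} (hX : BA X) (hE : Ex M 1 X) (hL : LRA X) (hRE : RE M X) (w : ℂ) (k : ℕ) :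
    ∀ a a2 e m m', Adj e m → Adj e m' → ok M (k + 2) a →
    ∑ a1 ∈ Finset.Ioo 0 M, Fu M X w k a e a1 m * Fu M X (w + 1) k a1 m a2 e =
    ∑ a1 ∈ Finset.Ioo 0 M, Fu M X w k a e a1 m' * Fu M X (w + 1) k a1 m' a2 e := by
  induction k with
  | zero => 
    have : ∀ a a2 e m, Adj e m → ok M (0 + 2) a → 
      ∑ a1 ∈ Finset.Ioo 0 M, Fu M X w 0 a e a1 m * Fu M X (w + 1) 0 a1 m a2 e =
        if a = e ∧ a2 = e then 1 else 0 := by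
      intro a a2 e m hm ha
      simp only [Fu]
      by_cases h1 : a = e
      · rw [Finset.sum_eq_single m]
        · simp [h1]
        · intro b _ hb; simp [hb]
        · intro h
          subst h1
          rw [Finset.mem_Ioo] at h
          unfold ok Adj at *; push_cast at *; omega
      · simp [h1]
    intro a a2 e m m' h1 h2 ha
    rw [this _ _ _ _ h1 ha, this _ _ _ _ h2 ha]
  | succ k ih =>
    intro a a2 e m m' h1 h2 ha
    by_cases hae : adm (k + 1) a e
    swap
    · simp [Fu_top hae]
    set a' := nx k a e with ha'
    have haa : Adj a a' := nx_adj _ _ _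
    set B : ℤ → ℤ → ℂ := fun m1 c1 => ∑ a1 ∈ Finset.Ioo 0 M, X (w + k) a a' a1 m1 * X (w + k + 1) a1 m1 a2 c1 with hB
    have go : ∀ m, Adj e m → 
        ∑ a1 ∈ Finset.Ioo 0 M, Fu M X w (k + 1) a e a1 m * Fu M X (w + 1) (k + 1) a1 m a2 e = 
        ∑ c1 ∈ Finset.Ioo 0 M, (if c1 = a' then B (a' + 1) a' else if c1 = a' + 2 then B (a' + 1) c1 else B (a' - 1) c1) *
          ∑ m1 ∈ Finset.Ioo 0 M, Fu M X w k a' e m1 m * Fu M X (w + 1) k m1 m c1 e := by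
      intro m hm
      have s1 : ∀ a1 ∈ Finset.Ioo 0 M, Fu M X w (k + 1) a e a1 m * Fu M X (w + 1) (k + 1) a1 m a2 e =
          ∑ m1 ∈ Finset.Ioo 0 M, ∑ c1 ∈ Finset.Ioo 0 M, 
            (X (w + k) a a' a1 m1 * X (w + k + 1) a1 m1 a2 c1) * (Fu M X w k a' e m1 m * Fu M X (w + 1) k m1 m c1 e) := by
        intro a1 _
        rw [Fu, if_pos hae, ← ha', Finset.sum_mul]
        apply Finset.sum_congr rfl
        intro m1 _
        by_cases q1 : Adj a1 m1
        swap
        · simp [hX _ _ _ _ _ q1]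
        by_cases q2 : adm k m1 m
        swap
        · simp [Fu_bot hX q2]
        by_cases q3 : Adj a a1
        swap
        · simp [hL _ _ _ _ _ (fun hh => q3 hh.1)]
        by_cases q4 : Adj a1 a2
        swap
        · rw [Fu_left hL (by unfold Adj at *; omega) q4]
          simp [hL _ _ _ _ _ (fun hh => q4 hh.1)]
        rw [Fu_star hX hE (w + 1) k a1 m a2 e m1 q1 q2 (by unfold Adj ok at *; push_cast at *; omega)
          (by unfold Adj ok at *; push_cast at *; omega), Finset.mul_sum]
        apply Finset.sum_congr rfl
        intro c1 _
        rw [show w + 1 + (k : ℂ) = w + k + 1 by ring]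
        ring
      rw [Finset.sum_congr rfl s1, Finset.sum_comm]
      simp_rw [Finset.sum_comm (s := Finset.Ioo 0 M) (t := Finset.Ioo 0 M) (f := fun a1 c1 => 
        (X (w + k) a a' a1 _ * X (w + k + 1) a1 _ a2 c1) * (Fu M X w k a' e _ m * Fu M X (w + 1) k _ m c1 e))]
      rw [Finset.sum_comm]
      apply Finset.sum_congr rfl
      intro c1 _
      rw [Finset.mul_sum]
      apply Finset.sum_congr rfl
      intro m1 _
      rw [← Finset.sum_mul]
      by_cases q1 : Adj a' m1
      swap
      · simp [Fu_left hL hm q1]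
      by_cases q2 : Adj m1 c1
      swap
      · rw [Fu_left hL (by unfold Adj at *; omega) q2]; simp
      congr 1
      change B m1 c1 = _
      by_cases q3 : c1 = a'
      · rw [if_pos q3, q3]
        rcases q1 with q1 | q1
        · rw [q1]
        · rw [q1]
          exact (hRE _ _ _ _ (by unfold ok at *; push_cast at *; omega)).symm
      · rw [if_neg q3]
        split_ifs with q4
        · have : m1 = a' + 1 := by unfold Adj at *; omega
          rw [this]
        · have : m1 = a' - 1 := by unfold Adj at *; omega
          rw [this]
    rw [go _ h1, go _ h2]
    apply Finset.sum_congr rfl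
    intro c1 _
    rw [ih _ _ _ _ _ h1 h2 (by unfold Adj ok at *; push_cast at *; omega)]

/-- Main abstract statement. -/
theorem abstractYB {M : ℤ} {W L : Wt} (k l : ℕ) (hk : 1 ≤ k) (hl : 1 ≤ l)
    (bW : BA W) (eW : Ex M 1 W) (lW : LRA W) (rW : RE M W) (bL : BA L) (eL : Ex M 1 L)
    (tL : ∀ w a b d c, ¬ Adj a b → L w a b d c = 0)
    (hYB : ∀ u v a b g f c e, Adj a b → ok M 1 a → ok M 1 g → ok M 1 f →
      ∑ d ∈ Finset.Ioo 0 M, L v a d g f * W (u - v) a b d c * L u d c f e =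
      ∑ d ∈ Finset.Ioo 0 M, L u a b g d * W (u - v) g d f e * L v b c d e)
    (u v : ℂ) (a b c e f g : ℤ) (ha : ok M (2 * k + 2 * l) a) (hb : ok M (2 * k + 2 * l) b)
    (hg : ok M (2 * k + 2 * l) g) (hf : f ∈ Finset.Ioo 0 M) (he : e ∈ Finset.Ioo 0 M)
    (hc : c ∈ Finset.Ioo 0 M) :
    ∑ d ∈ Finset.Ioo 0 M, Fu M (fun w b b' a a' => Fu M W (u - w) k a b a' b') v l b c a d *
        Fu M L u k d c f e * Fu M L v l a d g f =
    ∑ d ∈ Finset.Ioo 0 M, Fu M L u k a b g d * Fu M L v l b c d e *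
      Fu M (fun w b b' a a' => Fu M W (u - w) k a b a' b') v l d e g f := by
  have step1 : ∀ v a b g f c e, ok M (k + 1) a → ok M (k + 1) g → ok M (k + 1) f → c ∈ Finset.Ioo 0 M →
      ∑ d ∈ Finset.Ioo 0 M, L v a d g f * Fu M W (u - v) k a b d c * Fu M L u k d c f e =
      ∑ d ∈ Finset.Ioo 0 M, Fu M L u k a b g d * Fu M W (u - v) k g d f e * L v b c d e := by
    intro v a b g f c e ha hg hf hc
    have := fuse (M := M) (m := 1) (mX := 1) (mZ := 1) (N := 1) (X := fun w => W (w - v)) (Z := L)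
      (V := L v) (fun w => bW _) bL 
      (fun w a d c h1 h2 => by
        simpa [show w + 1 - v = w - v + 1 by ring] using eW (w - v) a d c h1 h2) eL le_rfl le_rfl le_rfl le_rfl
      (fun t m1 m2 b h => by
        left
        by_contra hh
        apply h
        apply tL
        unfold Adj; omega)
      (fun w a b g f c e h1 h2 h3 h4 => hYB w v a b g f c e h1 h2 h3 h4) u k a b g f c e ha hg hf
      (by rw [Finset.mem_Ioo]; unfold ok at *; push_cast at *; omega) hc
    have key : ∀ n a b d c, Fu M (fun w => W (w - v)) u n a b d c = Fu M W (u - v) n a b d c := by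
      intro n
      induction n with
      | zero => intros; rfl
      | succ n ih => 
        intro a b d c
        simp only [Fu, ih]
        rw [show u + (n : ℂ) - v = u - v + n by ring]
    simpa only [key] using this
  have bL2 : ∀ u n a b d c, Fu M L u n a b d c ≠ 0 → (c - d).natAbs ≤ n := by
    intro u n a b d c h
    by_contra hh
    apply h
    apply Fu_bot bL
    unfold adm; omega
  have := fuse (M := M) (m := 2 * k + 1) (mX := 1) (mZ := k + 2) (N := k) (X := L)
    (Z := fun w b b' a a' => Fu M W (u - w) k a b a' b')
    (V := fun t m1 m2 b => Fu M L u k m2 t b m1) bL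
    (fun w a b d c h => Fu_left' lW hk h) eL 
    (fun w e a a2 h1 h2 => by
      have := vert bW eW lW rW (u - w - 1) k a a2 e (e + 1) (e - 1) (Or.inl rfl) (Or.inr rfl) h2
      simpa [show u - (w + 1) = u - w - 1 by ring] using this) (by omega) (by omega) (by omega) (by omega)
    (fun t m1 m2 b h => Or.inr (bL2 _ _ _ _ _ _ h))
    (fun w b c a g e f hbc hb ha hg => by
      by_cases hgf : Adj g f
      swap
      · simp [bL _ _ _ _ _ hgf, Fu_left' lW hk hgf]
      by_cases hc : c ∈ Finset.Ioo 0 M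
      swap
      · exfalso; rw [Finset.mem_Ioo] at hc; unfold ok Adj at *; push_cast at *; omega
      have := step1 w a b g f c e (by unfold ok Adj at *; push_cast at *; omega)
        (by unfold ok Adj at *; push_cast at *; omega) (by unfold ok Adj at *; push_cast at *; omega) hc
      exact (Finset.sum_congr rfl fun d _ => by ring).trans
        (this.symm.trans (Finset.sum_congr rfl fun d _ => by ring))) v l b c a g e f (by unfold ok at *; push_cast at *; omega)
        (by unfold ok at *; push_cast at *; omega) (by unfold ok at *; push_cast at *; omega)
      (by rw [Finset.mem_Ioo]; unfold ok at *; push_cast at *; omega) he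
  exact (Finset.sum_congr rfl fun d _ => by ring).trans
    (this.symm.trans (Finset.sum_congr rfl fun d _ => by ring))
end

section
/-! ### Jacobi triple product -/

def PP (p : ℂ) (m : ℕ) : ℂ := ∏ j ∈ Finset.range m, (1 - p ^ (j + 1))

def gg (p : ℂ) (m : ℤ) : ℂ := if m < 0 then 0 else (PP p m.toNat)⁻¹

theorem one_sub_pow_ne {p : ℂ} (hp : ‖p‖ < 1) (j : ℕ) : 1 - p ^ (j + 1) ≠ 0 := by
  intro h
  have h1 : p ^ (j + 1) = 1 := by linear_combination -h
  have h2 : ‖p‖ ^ (j + 1) = 1 := by rw [← norm_pow, h1, norm_one]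
  have h3 := pow_lt_one₀ (norm_nonneg p) hp (Nat.succ_ne_zero j)
  simp only [Nat.succ_eq_add_one] at h3
  linarith

theorem PP_ne {p : ℂ} (hp : ‖p‖ < 1) (m : ℕ) : PP p m ≠ 0 :=
  Finset.prod_ne_zero_iff.mpr fun j _ => one_sub_pow_ne hp j

theorem gg_pred {p : ℂ} (hp : ‖p‖ < 1) (m : ℤ) : gg p (m - 1) = (1 - p ^ m) * gg p m := by
  rcases lt_trichotomy m 0 with h | h | h
  · simp [gg, h, show m < 1 by omega]
  · subst h; simp [gg]
  · obtain ⟨n, rfl⟩ : ∃ n : ℕ, m = n + 1 := ⟨(m - 1).toNat, by omega⟩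
    have h1 : ¬ ((n : ℤ) + 1 < 0) := by omega
    have h2 : ¬ ((n : ℤ) + 1 - 1 < 0) := by omega
    have h3 : ((n : ℤ) + 1).toNat = n + 1 := by omega
    have h4 : ((n : ℤ) + 1 - 1).toNat = n := by omega
    have h5 : p ^ ((n : ℤ) + 1) = p ^ (n + 1) := by
      rw [← zpow_natCast]; push_cast; rfl
    simp only [gg, h1, h2, if_false, h3, h4, h5]
    have h6 : PP p (n + 1) = PP p n * (1 - p ^ (n + 1)) := by
      simp [PP, Finset.prod_range_succ]
    rw [h6]
    have := PP_ne hp n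
    have := one_sub_pow_ne hp n
    field_simp

theorem coefStep {p : ℂ} (hp : ‖p‖ < 1) (hp0 : p ≠ 0) (N : ℕ) (n : ℤ) :
    PP p (2 * (N + 1)) * gg p ((N + 1 : ℕ) + n) * gg p ((N + 1 : ℕ) - n) =
      (1 + p ^ (2 * N + 1)) * (PP p (2 * N) * gg p (N + n) * gg p (N - n))
      + p ^ ((N : ℤ) + 1 - n) * (PP p (2 * N) * gg p (N + (n - 1)) * gg p (N - (n - 1)))
      + p ^ ((N : ℤ) + 1 + n) * (PP p (2 * N) * gg p (N + (n + 1)) * gg p (N - (n + 1))) := by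
  have e1 : gg p (N + n) = (1 - p ^ ((N : ℤ) + 1 + n)) * gg p ((N : ℤ) + 1 + n) := by
    rw [← gg_pred hp]; congr 1; ring
  have e2 : gg p (N - n) = (1 - p ^ ((N : ℤ) + 1 - n)) * gg p ((N : ℤ) + 1 - n) := by
    rw [← gg_pred hp]; congr 1; ring
  have e3 : gg p (N + (n - 1)) = (1 - p ^ ((N : ℤ) + n)) * gg p ((N : ℤ) + n) := by
    rw [← gg_pred hp]; congr 1; ring
  have e4 : gg p (N - (n + 1)) = (1 - p ^ ((N : ℤ) - n)) * gg p ((N : ℤ) - n) := by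
    rw [← gg_pred hp]; congr 1; ring
  have e5 : gg p (N - (n - 1)) = gg p ((N : ℤ) + 1 - n) := by congr 1; ring
  have e6 : gg p (N + (n + 1)) = gg p ((N : ℤ) + 1 + n) := by congr 1; ring
  have e7 : PP p (2 * (N + 1)) = PP p (2 * N) * (1 - p ^ (2 * N + 1)) * (1 - p ^ (2 * N + 2)) := by
    rw [show 2 * (N + 1) = 2 * N + 1 + 1 by ring]
    simp [PP, Finset.prod_range_succ]
  rw [e3, e4, e5, e6, e1, e2, e7]
  have f1 : p ^ ((N : ℤ) + 1 + n) = p * p ^ N * p ^ n := by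
    rw [zpow_add₀ hp0, zpow_add₀ hp0, zpow_one, zpow_natCast]; ring
  have f2 : p ^ ((N : ℤ) + 1 - n) = p * p ^ N * (p ^ n)⁻¹ := by
    rw [zpow_sub₀ hp0, zpow_add₀ hp0, zpow_one, zpow_natCast]; field_simp
  have f3 : p ^ ((N : ℤ) + n) = p ^ N * p ^ n := by
    rw [zpow_add₀ hp0, zpow_natCast]
  have f4 : p ^ ((N : ℤ) - n) = p ^ N * (p ^ n)⁻¹ := by
    rw [zpow_sub₀ hp0, zpow_natCast]; field_simp
  rw [f1, f2, f3, f4]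
  push_cast
  generalize gg p ((N : ℤ) + 1 + n) = A
  generalize gg p ((N : ℤ) + 1 - n) = B
  have hX : p ^ n ≠ 0 := zpow_ne_zero _ hp0
  generalize p ^ n = X at *
  rw [show p ^ (2 * N + 1) = p * (p ^ N) ^ 2 by ring, show p ^ (2 * N + 2) = p ^ 2 * (p ^ N) ^ 2 by ring]
  generalize p ^ N = Q
  field_simp
  ring

theorem hasSum_cf {α : Type} {f g : α → ℂ} {a b : ℂ} (h : HasSum f a) (h1 : ∀ n, g n = f n)
    (h2 : b = a) : HasSum g b := by
  rw [h2, funext h1]; exact h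

theorem finite_triple0 (E : ℤ → ℂ) (p z : ℂ) (hp : ‖p‖ < 1) (hp0 : p ≠ 0) (hz0 : z ≠ 0)
    (hE0 : E 0 = 1) (hE : ∀ n : ℤ, E (n + 1) = - z * p ^ n * E n) (N : ℕ) :
    HasSum (fun n : ℤ => E n * (PP p (2 * N) * gg p (N + n) * gg p (N - n)))
      (∏ j ∈ Finset.range N, ((1 - z * p ^ j) * (1 - p ^ (j + 1) / z))) := by
  induction N with
  | zero =>
    have : (fun n : ℤ => E n * (PP p (2 * 0) * gg p ((0 : ℕ) + n) * gg p ((0 : ℕ) - n)))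
        = fun n => if n = 0 then 1 else 0 := by
      funext n
      rcases lt_trichotomy n 0 with h | h | h
      · simp [gg, h, h.ne]
      · subst h; simp [gg, PP, hE0]
      · simp [gg, h, h.ne']
    have h2 := hasSum_ite_eq (0 : ℤ) (1 : ℂ)
    rw [← this] at h2
    simpa using h2
  | succ N ih =>
    set c : ℤ → ℂ := fun n => PP p (2 * N) * gg p (N + n) * gg p (N - n) with hc
    set F : ℂ := ∏ j ∈ Finset.range N, ((1 - z * p ^ j) * (1 - p ^ (j + 1) / z)) with hF
    have s0 : HasSum (fun n => E n * c n) F := ih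
    have s1 : HasSum (fun n => E (n - 1) * c (n - 1)) F :=
      (Equiv.subRight (1 : ℤ)).hasSum_iff (f := fun n => E n * c n) |>.mpr s0
    have s2 : HasSum (fun n => E (n + 1) * c (n + 1)) F :=
      (Equiv.addRight (1 : ℤ)).hasSum_iff (f := fun n => E n * c n) |>.mpr s0
    have s3 := ((s0.mul_left (1 + p ^ (2 * N + 1))).sub (s1.mul_left (z * p ^ N))).sub
      (s2.mul_left (p ^ (N + 1) / z))
    refine (hasSum_cf s3 ?_ ?_)
    · intro n
      rw [coefStep hp hp0]
      have a1 : E (n + 1) = - z * p ^ n * E n := hE n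
      have a2 : E n = - z * (p ^ n * p⁻¹) * E (n - 1) := by
        have := hE (n - 1)
        rw [sub_add_cancel, zpow_sub_one₀ hp0] at this
        exact this
      have hX : p ^ n ≠ 0 := zpow_ne_zero _ hp0
      have a3 : z * E (n - 1) = - (p * (p ^ n)⁻¹) * E n := by
        rw [a2]; field_simp
      have f1 : p ^ ((N : ℤ) + 1 + n) = p * p ^ N * p ^ n := by
        rw [zpow_add₀ hp0, zpow_add₀ hp0, zpow_one, zpow_natCast]; ring
      have f2 : p ^ ((N : ℤ) + 1 - n) = p * p ^ N * (p ^ n)⁻¹ := by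
        rw [zpow_sub₀ hp0, zpow_add₀ hp0, zpow_one, zpow_natCast]; field_simp
      rw [a1, f1, f2]
      simp only [hc]
      have e1 : p ^ (N + 1) / z * (-z * p ^ n * E n * (PP p (2 * N) * gg p (↑N + (n + 1)) * gg p (↑N - (n + 1)))) =
        - p ^ (N + 1) * p ^ n * E n * (PP p (2 * N) * gg p (↑N + (n + 1)) * gg p (↑N - (n + 1))) := by
        field_simp
      rw [e1]
      linear_combination (p ^ N * (PP p (2 * N) * gg p (↑N + (n - 1)) * gg p (↑N - (n - 1)))) * a3
    · rw [Finset.prod_range_succ, ← hF]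
      field_simp
      ring

theorem finite_triple (x σ p z : ℂ) (hp : ‖p‖ < 1) (hpd : p = cexp (2 * Real.pi * I * σ))
    (hz : z = cexp (2 * Real.pi * I * x)) (N : ℕ) :
    HasSum (fun n : ℤ => jacobiTheta₂_term n (x - σ / 2 + 1 / 2) σ *
        (PP p (2 * N) * gg p (N + n) * gg p (N - n)))
      (∏ j ∈ Finset.range N, ((1 - z * p ^ j) * (1 - p ^ (j + 1) / z))) := by
  have hp0 : p ≠ 0 := by rw [hpd]; exact Complex.exp_ne_zero _
  have hz0 : z ≠ 0 := by rw [hz]; exact Complex.exp_ne_zero _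
  refine finite_triple0 _ p z hp hp0 hz0 (by simp [jacobiTheta₂_term]) ?_ N
  intro n
  rw [jacobiTheta₂_term, jacobiTheta₂_term, hz, hpd, ← Complex.exp_int_mul,
    ← neg_one_mul (cexp _), ← Complex.exp_pi_mul_I, ← Complex.exp_add, ← Complex.exp_add,
    ← Complex.exp_add]
  congr 1
  push_cast
  ring

theorem mulA {p : ℂ} (hp : ‖p‖ < 1) (w : ℂ) : Multipliable (fun j : ℕ => 1 - w * p ^ j) := by
  have : Summable (fun j : ℕ => ‖-(w * p ^ j)‖) := by
    simp only [norm_neg, norm_mul, norm_pow]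
    exact (summable_geometric_of_lt_one (norm_nonneg p) hp).mul_left _
  simpa [sub_eq_add_neg] using multipliable_one_add_of_summable this

theorem triple (x σ p z : ℂ) (hσ : 0 < σ.im) (hpd : p = cexp (2 * Real.pi * I * σ))
    (hz : z = cexp (2 * Real.pi * I * x)) :
    Theta p z = jacobiTheta₂ (x - σ / 2 + 1 / 2) σ := by
  have hp : ‖p‖ < 1 := by
    rw [hpd, Complex.norm_exp]
    simp only [Real.exp_lt_one_iff]
    simp
    positivity
  have hz0 : z ≠ 0 := by rw [hz]; exact Complex.exp_ne_zero _
  have m1 := mulA hp z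
  have m2 : Multipliable (fun j : ℕ => 1 - p ^ (j + 1) / z) := by
    convert mulA hp (p / z) using 2; ring
  have m3 : Multipliable (fun j : ℕ => 1 - p ^ (j + 1)) := by
    convert mulA hp p using 2; ring
  have t12 := (m1.mul m2).hasProd.tendsto_prod_nat
  have t3 := m3.hasProd.tendsto_prod_nat
  have tT := ((m1.mul m2).mul m3).hasProd.tendsto_prod_nat
  have hPne : (∏' j : ℕ, (1 - p ^ (j + 1))) ≠ 0 := by
    have hs : Summable (fun j : ℕ => ‖-(p ^ (j + 1))‖) := by
      simp only [norm_neg, norm_pow, pow_succ (‖p‖)]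
      exact (summable_geometric_of_lt_one (norm_nonneg p) hp).mul_right _
    have := tprod_one_add_ne_zero_of_summable (f := fun j : ℕ => -(p ^ (j + 1)))
      (fun i => by simpa [sub_eq_add_neg] using one_sub_pow_ne hp i) hs
    simpa [sub_eq_add_neg] using this
  set Pi : ℂ := ∏' j : ℕ, (1 - p ^ (j + 1)) with hPi
  have tP : Filter.Tendsto (PP p) Filter.atTop (nhds Pi) := t3
  have tPi : Filter.Tendsto (fun m => (PP p m)⁻¹) Filter.atTop (nhds Pi⁻¹) := tP.inv₀ hPne
  obtain ⟨C1, hC1⟩ := tP.norm.bddAbove_range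
  obtain ⟨C2, hC2⟩ := tPi.norm.bddAbove_range
  have b1 : ∀ m, ‖PP p m‖ ≤ C1 := fun m => hC1 ⟨m, rfl⟩
  have b2 : ∀ m, ‖gg p m‖ ≤ C2 := by
    intro m
    have h0 : ‖(PP p m.toNat)⁻¹‖ ≤ C2 := hC2 ⟨_, rfl⟩
    unfold gg
    split_ifs
    · simpa using (norm_nonneg _).trans h0
    · exact h0
  have hC1' : 0 ≤ C1 := (norm_nonneg _).trans (b1 0)
  have hC2' : 0 ≤ C2 := (norm_nonneg _).trans (b2 0)
  set E : ℤ → ℂ := fun n => jacobiTheta₂_term n (x - σ / 2 + 1 / 2) σ with hEd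
  have hsE : Summable E := (summable_jacobiTheta₂_term_iff _ _).mpr hσ
  have lim : Filter.Tendsto (fun N : ℕ => ∑' n : ℤ, E n * (PP p (2 * N) * gg p (N + n) * gg p (N - n)))
      Filter.atTop (nhds (∑' n : ℤ, E n * (Pi * Pi⁻¹ * Pi⁻¹))) := by
    refine tendsto_tsum_of_dominated_convergence (bound := fun n => ‖E n‖ * (C1 * C2 * C2))
      (hsE.norm.mul_right _) ?_ ?_
    · intro n
      refine Filter.Tendsto.const_mul _ ?_
      refine Filter.Tendsto.mul (Filter.Tendsto.mul ?_ ?_) ?_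
      · exact tP.comp (Filter.tendsto_id.const_mul_atTop' (by norm_num))
      · have hh : Filter.Tendsto (fun N : ℕ => ((N : ℤ) + n).toNat) Filter.atTop Filter.atTop := by
          refine Filter.tendsto_atTop.mpr fun b => ?_
          filter_upwards [Filter.eventually_ge_atTop (b + n.natAbs)] with N hN
          omega
        refine (tPi.comp hh).congr' ?_
        filter_upwards [Filter.eventually_ge_atTop (n.natAbs)] with N hN
        simp only [gg, Function.comp]
        rw [if_neg (by omega)]
      · have hh : Filter.Tendsto (fun N : ℕ => ((N : ℤ) - n).toNat) Filter.atTop Filter.atTop := by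
          refine Filter.tendsto_atTop.mpr fun b => ?_
          filter_upwards [Filter.eventually_ge_atTop (b + n.natAbs)] with N hN
          omega
        refine (tPi.comp hh).congr' ?_
        filter_upwards [Filter.eventually_ge_atTop (n.natAbs)] with N hN
        simp only [gg, Function.comp]
        rw [if_neg (by omega)]
    · refine Filter.Eventually.of_forall fun N n => ?_
      rw [norm_mul, norm_mul, norm_mul]
      gcongr
      · exact b1 _
      · exact b2 _
      · exact b2 _
  have lim2 := lim.congr (fun N => (finite_triple x σ p z hp hpd hz N).tsum_eq)
  have u1 := tendsto_nhds_unique lim2 t12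
  rw [tsum_mul_right] at u1
  have u2 : Filter.Tendsto (fun N => (∏ j ∈ Finset.range N, ((1 - z * p ^ j) * (1 - p ^ (j + 1) / z))) * PP p N)
      Filter.atTop (nhds _) := t12.mul tP
  have u3 := tendsto_nhds_unique (u2.congr fun N => by rw [PP, ← Finset.prod_mul_distrib]) tT
  rw [Theta, ← u3, ← u1]
  rw [jacobiTheta₂]
  change (∑' n, E n) * _ * _ = ∑' n, E n
  field_simp
end

section
theorem th1_eq (v σ : ℂ) (hσ : 0 < σ.im) :
    th1 v σ = I * cexp (2 * Real.pi * I * σ / 8) * cexp (-(I * Real.pi * v)) *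
      jacobiTheta₂ (v - σ / 2 + 1 / 2) σ := by
  rw [← triple v σ _ _ hσ rfl rfl, Theta, th1]
  have hp : ‖cexp (2 * Real.pi * I * σ)‖ < 1 := by
    rw [Complex.norm_exp]
    simp only [Real.exp_lt_one_iff]
    simp
    positivity
  have hz0 : cexp (2 * Real.pi * I * v) ≠ 0 := Complex.exp_ne_zero _
  have hs : 2 * Complex.sin (Real.pi * v) =
      I * cexp (-(I * Real.pi * v)) * (1 - cexp (2 * Real.pi * I * v)) := by
    rw [Complex.sin]
    have h1 : cexp (-(I * Real.pi * v)) * cexp (2 * Real.pi * I * v) = cexp (Real.pi * v * I) := by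
      rw [← Complex.exp_add]; congr 1; ring
    rw [mul_sub, mul_assoc I _ (cexp (2 * Real.pi * I * v)), h1]
    rw [show -(Real.pi * v) * I = -(I * Real.pi * v) by ring]
    ring
  have hc : 2 * Complex.cos (2 * Real.pi * v) =
      cexp (2 * Real.pi * I * v) + (cexp (2 * Real.pi * I * v))⁻¹ := by
    rw [Complex.cos, ← Complex.exp_neg]
    rw [show 2 * Real.pi * v * I = 2 * Real.pi * I * v by ring,
      show -(2 * Real.pi * v) * I = -(2 * Real.pi * I * v) by ring]
    ring
  set p := cexp (2 * Real.pi * I * σ) with hpd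
  set z := cexp (2 * Real.pi * I * v) with hz
  have m1 := mulA hp z
  have m1' : Multipliable (fun j : ℕ => 1 - z * p ^ (j + 1)) := by
    convert mulA hp (z * p) using 2; ring
  have m2 : Multipliable (fun j : ℕ => 1 - p ^ (j + 1) / z) := by
    convert mulA hp (p / z) using 2; ring
  have m3 : Multipliable (fun j : ℕ => 1 - p ^ (j + 1)) := by
    convert mulA hp p using 2; ring
  have e1 : (fun n : ℕ => 1 - 2 * p ^ (n + 1) * Complex.cos (2 * Real.pi * v) + p ^ (2 * (n + 1))) =
      fun n => (1 - z * p ^ (n + 1)) * (1 - p ^ (n + 1) / z) := by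
    funext n
    rw [show 2 * p ^ (n + 1) * Complex.cos (2 * Real.pi * v) =
      p ^ (n + 1) * (2 * Complex.cos (2 * Real.pi * v)) by ring, hc]
    field_simp
    ring
  rw [e1, m1'.tprod_mul m2, (m1.mul m2).tprod_mul m3, m1.tprod_mul m2,
    tprod_eq_zero_mul' (f := fun j : ℕ => 1 - z * p ^ j) m1']
  simp only [pow_zero, mul_one]
  linear_combination (cexp (2 * Real.pi * I * σ / 8) * (∏' n : ℕ, (1 - p ^ (n + 1))) *
    ((∏' n : ℕ, (1 - z * p ^ (n + 1))) * (∏' n : ℕ, (1 - p ^ (n + 1) / z)))) * hs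

theorem th0_eq (x σ : ℂ) (hσ : 0 < σ.im) : th0 x σ = jacobiTheta₂ (x + 1 / 2) σ := by
  rw [th0, th1_eq _ _ hσ]
  have : cexp (Real.pi * I * (x + σ / 4)) * cexp (2 * Real.pi * I * σ / 8) *
      cexp (-(I * Real.pi * (x + σ / 2))) = 1 := by
    rw [← Complex.exp_add, ← Complex.exp_add, ← Complex.exp_zero]; congr 1; ring
  rw [show x + σ / 2 - σ / 2 + 1 / 2 = x + 1 / 2 by ring]
  linear_combination (jacobiTheta₂ (x + 1 / 2) σ) * this - (cexp (Real.pi * I * (x + σ / 4)) * cexp (2 * Real.pi * I * σ / 8) *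
      cexp (-(I * Real.pi * (x + σ / 2))) * (jacobiTheta₂ (x + 1 / 2) σ)) * I_sq

theorem th3_eq (x σ : ℂ) (hσ : 0 < σ.im) : th3 x σ = jacobiTheta₂ x σ := by
  rw [th3, th1_eq _ _ hσ]
  have : cexp (Real.pi * I * (x + σ / 4)) * cexp (2 * Real.pi * I * σ / 8) *
      cexp (-(I * Real.pi * (x + (σ + 1) / 2))) = -I := by
    rw [← Complex.exp_add, ← Complex.exp_add, ← Complex.exp_neg_pi_div_two_mul_I]; congr 1; ring
  rw [show x + (σ + 1) / 2 - σ / 2 + 1 / 2 = x + 1 by ring, jacobiTheta₂_add_left]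
  linear_combination (I * jacobiTheta₂ x σ) * this - jacobiTheta₂ x σ * I_sq

def TT (τ w : ℂ) : ℂ := cexp (-(Real.pi * I * w)) * jacobiTheta₂ (-w + (1 + τ) / 2) τ

theorem br_eq (τ : ℂ) (r : ℝ) (hτ : 0 < τ.im) (hr : 0 < r) :
    ∃ K : ℂ, K ≠ 0 ∧ ∀ w : ℂ, br τ r (r * w) = K * TT τ w := by
  have ht0 : τ ≠ 0 := by rintro rfl; simp at hτ
  have hr0 : (r : ℂ) ≠ 0 := by exact_mod_cast hr.ne'
  have hIt : (-I * τ) ≠ 0 := mul_ne_zero (neg_ne_zero.mpr I_ne_zero) ht0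
  have hk : (-I * τ) ^ (1 / 2 : ℂ) ≠ 0 := by
    rw [Complex.cpow_def_of_ne_zero hIt]; exact Complex.exp_ne_zero _
  refine ⟨(-I * τ) ^ (1 / 2 : ℂ) * cexp (Real.pi * I * (1 + τ) ^ 2 / (4 * τ)),
    mul_ne_zero hk (Complex.exp_ne_zero _), fun w => ?_⟩
  have him : 0 < (-1 / τ).im := by
    rw [neg_div, one_div, Complex.neg_im, Complex.inv_im]
    have : 0 < Complex.normSq τ := Complex.normSq_pos.mpr ht0
    rw [neg_div, neg_neg]; positivity
  rw [br, triple (-w / τ) (-1 / τ) _ _ him, TT, jacobiTheta₂_functional_equation (-w + (1 + τ) / 2) τ]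
  · rw [show (-w + (1 + τ) / 2) / τ = -w / τ - -1 / τ / 2 + 1 / 2 by field_simp; ring]
    have : xp τ r ((r * w) ^ 2 / r - r * w) =
      cexp (Real.pi * I * (1 + τ) ^ 2 / (4 * τ)) * (cexp (-(Real.pi * I * w)) *
        cexp (-Real.pi * I * (-w + (1 + τ) / 2) ^ 2 / τ)) := by
      rw [xp, ← Complex.exp_add, ← Complex.exp_add]; congr 1; field_simp; ring
    rw [this]
    field_simp
  · rw [xp]; congr 1; field_simp
  · rw [xp]; congr 1; field_simp

theorem prodSum {f g : ℤ → ℂ} (hf : Summable f) (hg : Summable g) :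
    HasSum (fun q : ℤ × ℤ => f q.1 * g q.2) ((∑' n, f n) * ∑' n, g n) := by
  have s3 : Summable (fun q : ℤ × ℤ => f q.1 * g q.2) := summable_mul_of_summable_norm hf.norm hg.norm
  have h := s3.hasSum
  rwa [← tsum_mul_tsum_of_summable_norm hf.norm hg.norm] at h

theorem det_series (τ x y : ℂ) (hτ : 0 < τ.im) :
    th0 x (τ / 2) * th3 y (τ / 2) - th3 x (τ / 2) * th0 y (τ / 2) =
      (-2 * cexp (Real.pi * I * τ / 2)) * (TT τ (x + y) * TT τ (x - y)) := by
  have hσ : 0 < (τ / 2).im := by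
    rw [show τ / 2 = ((1 / 2 : ℝ) : ℂ) * τ by push_cast; ring, Complex.im_ofReal_mul]; positivity
  rw [th0_eq _ _ hσ, th0_eq _ _ hσ, th3_eq _ _ hσ, th3_eq _ _ hσ]
  have H : ∀ w1 w2 σ : ℂ, 0 < σ.im → HasSum (fun q : ℤ × ℤ => jacobiTheta₂_term q.1 w1 σ *
      jacobiTheta₂_term q.2 w2 σ) (jacobiTheta₂ w1 σ * jacobiTheta₂ w2 σ) := by
    intro w1 w2 σ h
    exact prodSum ((summable_jacobiTheta₂_term_iff w1 σ).mpr h)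
      ((summable_jacobiTheta₂_term_iff w2 σ).mpr h)
  have hL := (H (x + 1 / 2) y (τ / 2) hσ).sub (H x (y + 1 / 2) (τ / 2) hσ)
  have hR := (H (-(x + y) + (1 + τ) / 2) (-(x - y) + (1 + τ) / 2) τ hτ).mul_left
    ((-2 * cexp (Real.pi * I * τ / 2)) * (cexp (-(Real.pi * I * (x + y))) * cexp (-(Real.pi * I * (x - y)))))
  let φ : ℤ × ℤ → ℤ × ℤ := fun q => (-(q.1 + q.2 + 1), q.2 - q.1)
  have hφ : Function.Injective φ := by
    rintro ⟨a, b⟩ ⟨c, d⟩ h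
    simp only [φ, Prod.mk.injEq] at h ⊢
    omega
  have hs2 : ∀ (n : ℤ) (X Y : ℂ), X = Y + Real.pi * I * (2 * n) → cexp X = cexp Y := by
    intro n X Y h
    rw [h, Complex.exp_add, show Real.pi * I * (2 * n) = n * (2 * Real.pi * I) by ring,
      Complex.exp_int_mul_two_pi_mul_I n, mul_one]
  rw [← hφ.hasSum_iff] at hL
  · have := hL.unique (hasSum_cf hR ?_ rfl)
    · rw [this, TT, TT]; ring
    · rintro ⟨l, j⟩
      simp only [φ, Function.comp, jacobiTheta₂_term]
      set A := cexp (2 * Real.pi * I * (-(l + j + 1)) * x + 2 * Real.pi * I * (j - l) * y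
        + Real.pi * I * τ / 2 * ((l + j + 1) ^ 2 + (j - l) ^ 2)) with hA
      have k1 : cexp (2 * Real.pi * I * ((-(l + j + 1) : ℤ) : ℂ) * (x + 1 / 2) + Real.pi * I * ((-(l + j + 1) : ℤ) : ℂ) ^ 2 * (τ / 2)) *
          cexp (2 * Real.pi * I * ((j - l : ℤ) : ℂ) * y + Real.pi * I * ((j - l : ℤ) : ℂ) ^ 2 * (τ / 2)) =
          - (A * cexp (Real.pi * I * (j - l))) := by
        rw [← neg_one_mul (A * _), ← Complex.exp_pi_mul_I, hA, ← Complex.exp_add, ← Complex.exp_add,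
          ← Complex.exp_add]
        refine hs2 (-j - 1) _ _ ?_; push_cast; ring
      have k2 : cexp (2 * Real.pi * I * ((-(l + j + 1) : ℤ) : ℂ) * x + Real.pi * I * ((-(l + j + 1) : ℤ) : ℂ) ^ 2 * (τ / 2)) *
          cexp (2 * Real.pi * I * ((j - l : ℤ) : ℂ) * (y + 1 / 2) + Real.pi * I * ((j - l : ℤ) : ℂ) ^ 2 * (τ / 2)) =
          A * cexp (Real.pi * I * (j - l)) := by
        rw [hA, ← Complex.exp_add, ← Complex.exp_add]
        congr 1; push_cast; ring
      rw [k1, k2]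
      have k3 : cexp (Real.pi * I * τ / 2) * (cexp (-(Real.pi * I * (x + y))) * cexp (-(Real.pi * I * (x - y)))) *
         (cexp (2 * Real.pi * I * l * (-(x + y) + (1 + τ) / 2) + Real.pi * I * l ^ 2 * τ) *
          cexp (2 * Real.pi * I * j * (-(x - y) + (1 + τ) / 2) + Real.pi * I * j ^ 2 * τ)) =
          A * cexp (Real.pi * I * (j - l)) := by
        rw [hA, ← Complex.exp_add, ← Complex.exp_add, ← Complex.exp_add, ← Complex.exp_add,
          ← Complex.exp_add]
        refine hs2 l _ _ ?_; ring
      linear_combination 2 * k3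
  · rintro ⟨m, n⟩ hmn
    have hev : ∃ t : ℤ, m = n + 2 * t := by
      rcases Int.even_or_odd (m + n) with h | h
      · obtain ⟨t, ht⟩ := h
        exact ⟨t - n, by omega⟩
      · obtain ⟨t, ht⟩ := h
        exact absurd ⟨(-t - 1, n - t - 1), by simp only [φ, Prod.mk.injEq]; omega⟩ hmn
    obtain ⟨t, rfl⟩ := hev
    simp only [jacobiTheta₂_term]
    rw [← Complex.exp_add, ← Complex.exp_add, sub_eq_zero]
    refine hs2 t _ _ ?_; push_cast; ring

/-- The determinant identity. -/
theorem DET (τ : ℂ) (r : ℝ) (hτ : 0 < τ.im) (hr : 0 < r) :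
    ∃ K : ℂ, K ≠ 0 ∧ ∀ x y, th0 (x / (2 * r)) (τ / 2) * th3 (y / (2 * r)) (τ / 2) -
      th3 (x / (2 * r)) (τ / 2) * th0 (y / (2 * r)) (τ / 2) =
      K * br τ r ((x + y) / 2) * br τ r ((x - y) / 2) := by
  obtain ⟨K, hK, h⟩ := br_eq τ r hτ hr
  have hr0 : (r : ℂ) ≠ 0 := by exact_mod_cast hr.ne'
  refine ⟨(-2 * cexp (Real.pi * I * τ / 2)) * (K⁻¹ * K⁻¹), ?_, fun x y => ?_⟩
  · simp [hK, Complex.exp_ne_zero]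
  · rw [det_series _ _ _ hτ]
    have h1 := h (x / (2 * r) + y / (2 * r))
    have h2 := h (x / (2 * r) - y / (2 * r))
    rw [show r * (x / (2 * r) + y / (2 * r)) = (x + y) / 2 by field_simp] at h1
    rw [show r * (x / (2 * r) - y / (2 * r)) = (x - y) / 2 by field_simp] at h2
    rw [h1, h2]
    field_simp
end

section
structure Br3 (t : ℂ → ℂ) : Prop where
  odd : ∀ x, t (-x) = - t x
  three : ∀ x y z w, t (x + y) * t (x - y) * (t (z + w) * t (z - w))
    - t (x + z) * t (x - z) * (t (y + w) * t (y - w))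
    + t (x + w) * t (x - w) * (t (y + z) * t (y - z)) = 0

/-- three-term relation with free arguments -/
theorem Br3.tt {t : ℂ → ℂ} (h : Br3 t) (x y z w a1 a2 a3 a4 b1 b2 b3 b4 c1 c2 c3 c4 : ℂ)
    (h1 : x + y = a1) (h2 : x - y = a2) (h3 : z + w = a3) (h4 : z - w = a4)
    (k1 : x + z = b1) (k2 : x - z = b2) (k3 : y + w = b3) (k4 : y - w = b4)
    (l1 : x + w = c1) (l2 : x - w = c2) (l3 : y + z = c3) (l4 : y - z = c4) :
    t a1 * t a2 * (t a3 * t a4) - t b1 * t b2 * (t b3 * t b4) + t c1 * t c2 * (t c3 * t c4) = 0 := by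
  subst h1 h2 h3 h4 k1 k2 k3 k4 l1 l2 l3 l4
  exact h.three x y z w

def ell (t : ℂ → ℂ) (κ u α γ : ℂ) : ℂ := κ * t ((α + γ) / 2) * t ((α - γ) / 2 - u) / (t γ * t u)
def w0 (t : ℂ → ℂ) (w α : ℂ) : ℂ := t (α - w) * t 1 / (t α * t (1 + w))
def w1 (t : ℂ → ℂ) (w α : ℂ) : ℂ := t (α + 1) * t w / (t α * t (1 + w))

variable {t : ℂ → ℂ}

theorem ell_eq (κ u α γ P Q : ℂ) (h1 : α + γ = 2 * P) (h2 : α - γ = 2 * Q) :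
    ell t κ u α γ = κ * t P * t (Q - u) / (t γ * t u) := by
  rw [ell, h1, h2]; simp

theorem Br3.sw (h : Br3 t) (x y : ℂ) (e : y = -x) : t y = - t x := by rw [e, h.odd]

theorem yA (κ u v α γ : ℂ) :
    ell t κ v α γ * ell t κ u (α + 1) (γ + 1) = ell t κ u α γ * ell t κ v (α + 1) (γ + 1) := by
  rw [ell, ell, ell, ell]
  rw [show (α + 1 - (γ + 1)) / 2 = (α - γ) / 2 by ring]
  ring

theorem yB (h : Br3 t) (κ u v α γ : ℂ) (h0 : t γ ≠ 0) (h1 : t (γ + 1) ≠ 0) (h2 : t (γ - 1) ≠ 0)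
    (h3 : t (1 + (u - v)) ≠ 0) (hu : t u ≠ 0) (hv : t v ≠ 0) :
    ell t κ v α γ * ell t κ u (α + 1) (-γ - 1) =
      ell t κ u α γ * w0 t (u - v) γ * ell t κ v (α + 1) (-γ - 1) +
      ell t κ u α (-γ) * w1 t (u - v) (-γ) * ell t κ v (α + 1) (γ - 1) := by
  obtain ⟨P, hP⟩ : ∃ P, P = (α + γ) / 2 := ⟨_, rfl⟩
  obtain ⟨Q, hQ⟩ : ∃ Q, Q = (α - γ) / 2 := ⟨_, rfl⟩
  rw [ell_eq κ v α γ P Q (by rw [hP]; ring) (by rw [hQ]; ring),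
    ell_eq κ u α γ P Q (by rw [hP]; ring) (by rw [hQ]; ring),
    ell_eq κ u (α + 1) (-γ - 1) Q (P + 1) (by rw [hQ]; ring) (by rw [hP]; ring),
    ell_eq κ v (α + 1) (-γ - 1) Q (P + 1) (by rw [hQ]; ring) (by rw [hP]; ring),
    ell_eq κ u α (-γ) Q P (by rw [hQ]; ring) (by rw [hP]; ring),
    ell_eq κ v (α + 1) (γ - 1) P (Q + 1) (by rw [hP]; ring) (by rw [hQ]; ring), w0, w1]
  rw [h.sw (γ + 1) (-γ - 1) (by ring), h.sw γ (-γ) rfl, h.sw (γ - 1) (-γ + 1) (by ring)]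
  have T := h.tt ((P + Q + 1 - u - v) / 2) ((P - Q + 1 - u + v) / 2) ((1 + u - v + P - Q) / 2)
    ((1 + u - v - P + Q) / 2)
    (P + 1 - u) (Q - v) (1 + (u - v)) γ (P + 1 - v) (Q - u) 1 (γ - (u - v))
    (Q + 1 - v) (P - u) (γ + 1) (-(u - v)) (by ring) (by ring) (by ring) (by rw [hP, hQ]; ring) (by ring) (by ring)
    (by ring) (by rw [hP, hQ]; ring) (by ring) (by ring) (by rw [hP, hQ]; ring) (by ring)
  rw [h.odd] at T
  field_simp
  linear_combination -(κ ^ 2 * t P * t Q) * T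

theorem yC (h : Br3 t) (κ u v α γ : ℂ) (h0 : t α ≠ 0) (h3 : t (1 + (u - v)) ≠ 0) :
    ell t κ v α γ * w0 t (u - v) α * ell t κ u (-α - 1) (γ + 1) +
      ell t κ v (-α) γ * w1 t (u - v) α * ell t κ u (α - 1) (γ + 1) =
      ell t κ u α γ * ell t κ v (-α - 1) (γ + 1) := by
  obtain ⟨P, hP⟩ : ∃ P, P = (α + γ) / 2 := ⟨_, rfl⟩
  obtain ⟨Q, hQ⟩ : ∃ Q, Q = (α - γ) / 2 := ⟨_, rfl⟩
  rw [ell_eq κ v α γ P Q (by rw [hP]; ring) (by rw [hQ]; ring),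
    ell_eq κ u α γ P Q (by rw [hP]; ring) (by rw [hQ]; ring),
    ell_eq κ u (-α - 1) (γ + 1) (-Q) (-P - 1) (by rw [hQ]; ring) (by rw [hP]; ring),
    ell_eq κ v (-α - 1) (γ + 1) (-Q) (-P - 1) (by rw [hQ]; ring) (by rw [hP]; ring),
    ell_eq κ v (-α) γ (-Q) (-P) (by rw [hQ]; ring) (by rw [hP]; ring),
    ell_eq κ u (α - 1) (γ + 1) P (Q - 1) (by rw [hP]; ring) (by rw [hQ]; ring), w0, w1]
  rw [h.sw Q (-Q) rfl, h.sw (P + 1 + u) (-P - 1 - u) (by ring),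
    h.sw (P + 1 + v) (-P - 1 - v) (by ring), h.sw (P + v) (-P - v) (by ring)]
  have T := h.tt ((P + Q + 1 - u + v) / 2) ((P - Q + 1 + u + v) / 2) ((1 + u - v + P + Q) / 2)
    ((1 + u - v - P - Q) / 2)
    (P + 1 + v) (Q - u) (1 + (u - v)) α (α + 1) (-(u - v)) (-(Q - 1 - u)) (P + v)
    1 (α - (u - v)) (P + 1 + u) (-(Q - v))
    (by ring) (by ring) (by ring) (by rw [hP, hQ]; ring) (by rw [hP, hQ]; ring) (by ring)
    (by ring) (by ring) (by ring) (by rw [hP, hQ]; ring) (by ring) (by ring)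
  rw [h.odd, h.odd, h.odd] at T
  field_simp
  linear_combination -(κ ^ 2 * t P * t Q / (t γ * t v * t u * t (γ + 1))) * T

theorem yD (h : Br3 t) (κ u v α γ : ℂ) (h0 : t α ≠ 0) (hg : t γ ≠ 0) (h1 : t (γ + 1) ≠ 0)
    (h2 : t (γ - 1) ≠ 0)
    (h3 : t (1 + (u - v)) ≠ 0) (hu : t u ≠ 0) (hv : t v ≠ 0) :
    ell t κ v α γ * w0 t (u - v) α * ell t κ u (-α - 1) (-γ - 1) +
      ell t κ v (-α) γ * w1 t (u - v) α * ell t κ u (α - 1) (-γ - 1) =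
    ell t κ u α γ * w0 t (u - v) γ * ell t κ v (-α - 1) (-γ - 1) +
      ell t κ u α (-γ) * w1 t (u - v) (-γ) * ell t κ v (-α - 1) (γ - 1) := by
  obtain ⟨P, hP⟩ : ∃ P, P = (α + γ) / 2 := ⟨_, rfl⟩
  obtain ⟨Q, hQ⟩ : ∃ Q, Q = (α - γ) / 2 := ⟨_, rfl⟩
  rw [ell_eq κ v α γ P Q (by rw [hP]; ring) (by rw [hQ]; ring),
    ell_eq κ u α γ P Q (by rw [hP]; ring) (by rw [hQ]; ring),
    ell_eq κ u (-α - 1) (-γ - 1) (-P - 1) (-Q) (by rw [hP]; ring) (by rw [hQ]; ring),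
    ell_eq κ v (-α - 1) (-γ - 1) (-P - 1) (-Q) (by rw [hP]; ring) (by rw [hQ]; ring),
    ell_eq κ v (-α) γ (-Q) (-P) (by rw [hQ]; ring) (by rw [hP]; ring),
    ell_eq κ u (α - 1) (-γ - 1) (Q - 1) P (by rw [hQ]; ring) (by rw [hP]; ring),
    ell_eq κ u α (-γ) Q P (by rw [hQ]; ring) (by rw [hP]; ring),
    ell_eq κ v (-α - 1) (γ - 1) (-Q - 1) (-P) (by rw [hQ]; ring) (by rw [hP]; ring), w0, w1, w0, w1]
  rw [h.sw (γ + 1) (-γ - 1) (by ring), h.sw γ (-γ) rfl, h.sw (γ - 1) (-γ + 1) (by ring),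
    h.sw (P + 1) (-P - 1) (by ring), h.sw (Q + u) (-Q - u) (by ring), h.sw (Q + v) (-Q - v) (by ring),
    h.sw Q (-Q) rfl, h.sw (P + v) (-P - v) (by ring), h.sw (Q + 1) (-Q - 1) (by ring)]
  have T1 := h.tt (P - (u - v) / 2) (Q - (u - v) / 2) (Q + (u - v) / 2) ((u + v) / 2)
    (α - (u - v)) γ (Q + u) (Q - v) α (γ - (u - v)) (Q + v) (Q - u)
    (P + v) (P - u) (2 * Q) (-(u - v))
    (by rw [hP, hQ]; ring) (by rw [hP, hQ]; ring) (by ring) (by ring) (by rw [hP, hQ]; ring)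
    (by rw [hP, hQ]; ring)
    (by ring) (by ring) (by ring) (by ring) (by ring) (by ring)
  have T2 := h.tt (P + 1 / 2) (Q - 1 / 2) (Q + 1 / 2) (1 / 2)
    α (γ + 1) (Q + 1) Q (α + 1) γ Q (Q - 1) (P + 1) P (2 * Q) (-1)
    (by rw [hP, hQ]; ring) (by rw [hP, hQ]; ring) (by ring) (by ring) (by rw [hP, hQ]; ring)
    (by rw [hP, hQ]; ring)
    (by ring) (by ring) (by ring) (by ring) (by ring) (by ring)
  rw [h.odd] at T1 T2
  field_simp
  linear_combination -(κ ^ 2 * t 1 * t P * t (P + 1)) * T1 + (κ ^ 2 * t (u - v) * t (P + v) * t (P - u)) * T2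

theorem ex1 (h : Br3 t) (w α : ℂ) : t α ^ 2 * t w * t (w + 2) + t (α - (w + 1)) * t (α + (w + 1)) * t 1 ^ 2
    = t (α - 1) * t (α + 1) * t (w + 1) ^ 2 := by
  have T := h.tt α 0 (w + 1) 1 α α (w + 2) w (α + (w + 1)) (α - (w + 1)) 1 (-1) (α + 1) (α - 1)
    (w + 1) (-(w + 1)) (by ring) (by ring) (by ring) (by ring) (by ring) (by ring)
    (by ring) (by ring) (by ring) (by ring) (by ring) (by ring)
  rw [h.odd, h.odd] at T
  linear_combination T

theorem ellEx2 (κ w α γ : ℂ) :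
    ell t κ (w + 1) α γ * ell t κ w (-α - 1) (γ + 1) =
    ell t κ (w + 1) (-α) γ * ell t κ w (α - 1) (γ + 1) := by
  obtain ⟨P, hP⟩ : ∃ P, P = (α + γ) / 2 := ⟨_, rfl⟩
  obtain ⟨Q, hQ⟩ : ∃ Q, Q = (α - γ) / 2 := ⟨_, rfl⟩
  rw [ell_eq κ (w + 1) α γ P Q (by rw [hP]; ring) (by rw [hQ]; ring),
    ell_eq κ w (-α - 1) (γ + 1) (-Q) (-P - 1) (by rw [hQ]; ring) (by rw [hP]; ring),
    ell_eq κ (w + 1) (-α) γ (-Q) (-P) (by rw [hQ]; ring) (by rw [hP]; ring),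
    ell_eq κ w (α - 1) (γ + 1) P (Q - 1) (by rw [hP]; ring) (by rw [hQ]; ring)]
  rw [show Q - 1 - w = Q - (w + 1) by ring, show -P - 1 - w = -P - (w + 1) by ring]
  ring

theorem ellEx0 (h : Br3 t) (κ w α γ : ℂ) (h0 : t γ ≠ 0) (h1 : t (γ + 1) ≠ 0) (h2 : t (γ - 1) ≠ 0) :
    ell t κ (w + 1) α γ * ell t κ w (-α - 1) (-γ - 1) +
      ell t κ (w + 1) α (-γ) * ell t κ w (-α - 1) (γ - 1) =
    ell t κ (w + 1) (-α) γ * ell t κ w (α - 1) (-γ - 1) +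
      ell t κ (w + 1) (-α) (-γ) * ell t κ w (α - 1) (γ - 1) := by
  obtain ⟨P, hP⟩ : ∃ P, P = (α + γ) / 2 := ⟨_, rfl⟩
  obtain ⟨Q, hQ⟩ : ∃ Q, Q = (α - γ) / 2 := ⟨_, rfl⟩
  rw [ell_eq κ (w + 1) α γ P Q (by rw [hP]; ring) (by rw [hQ]; ring),
    ell_eq κ w (-α - 1) (-γ - 1) (-P - 1) (-Q) (by rw [hP]; ring) (by rw [hQ]; ring),
    ell_eq κ (w + 1) α (-γ) Q P (by rw [hQ]; ring) (by rw [hP]; ring),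
    ell_eq κ w (-α - 1) (γ - 1) (-Q - 1) (-P) (by rw [hQ]; ring) (by rw [hP]; ring),
    ell_eq κ (w + 1) (-α) γ (-Q) (-P) (by rw [hQ]; ring) (by rw [hP]; ring),
    ell_eq κ w (α - 1) (-γ - 1) (Q - 1) P (by rw [hQ]; ring) (by rw [hP]; ring),
    ell_eq κ (w + 1) (-α) (-γ) (-P) (-Q) (by rw [hP]; ring) (by rw [hQ]; ring),
    ell_eq κ w (α - 1) (γ - 1) (P - 1) Q (by rw [hP]; ring) (by rw [hQ]; ring)]
  rw [h.sw (γ + 1) (-γ - 1) (by ring), h.sw γ (-γ) rfl,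
    h.sw (P + 1) (-P - 1) (by ring), h.sw (Q + w) (-Q - w) (by ring), h.sw (P + w) (-P - w) (by ring),
    h.sw Q (-Q) rfl, h.sw P (-P) rfl, h.sw (Q + 1) (-Q - 1) (by ring),
    h.sw (P + (w + 1)) (-P - (w + 1)) (by ring), h.sw (Q + (w + 1)) (-Q - (w + 1)) (by ring)]
  have T : ∀ P Q γ : ℂ, γ = P - Q → t P * t (Q - (w + 1)) * t (P + 1) * t (Q + w) -
      t Q * t (P + (w + 1)) * t (Q - 1) * t (P - w) = - t (P + Q) * t (w + 1) * t w * t (γ + 1) := by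
    intro P Q γ hg
    have T := h.tt (P + 1 / 2) (1 / 2) (Q - 1 / 2) (w + 1 / 2)
      (P + 1) P (Q + w) (Q - (w + 1)) (P + Q) (γ + 1) (w + 1) (-w) (P + (w + 1)) (P - w) Q (-(Q - 1))
      (by ring) (by ring) (by ring) (by ring) (by ring) (by rw [hg]; ring)
      (by ring) (by ring) (by ring) (by ring) (by ring) (by ring)
    rw [h.odd, h.odd] at T
    linear_combination T
  have Ta := T P Q γ (by rw [hP, hQ]; ring)
  have Tb := T Q P (-γ) (by rw [hP, hQ]; ring)
  rw [h.sw (γ - 1) (-γ + 1) (by ring), add_comm Q P] at Tb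
  by_cases hw : t w = 0
  · simp [hw]
  by_cases hw1 : t (w + 1) = 0
  · simp [hw1]
  field_simp
  linear_combination -(κ ^ 2 * t (γ - 1)) * Ta - κ ^ 2 * t (γ + 1) * Tb
end

section
theorem br3 (τ : ℂ) (r : ℝ) (hτ : 0 < τ.im) (hr : 0 < r) (h1 : br τ r 1 ≠ 0) : Br3 (br τ r) := by
  obtain ⟨K, hK, h⟩ := DET τ r hτ hr
  have h' : ∀ x y : ℂ, th0 (2 * x / (2 * r)) (τ / 2) * th3 (2 * y / (2 * r)) (τ / 2) -
      th3 (2 * x / (2 * r)) (τ / 2) * th0 (2 * y / (2 * r)) (τ / 2) =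
      K * br τ r (x + y) * br τ r (x - y) := by
    intro x y
    rw [h, show (2 * x + 2 * y) / 2 = x + y by ring, show (2 * x - 2 * y) / 2 = x - y by ring]
  constructor
  · intro x
    have a1 := h' ((1 + x) / 2) ((1 - x) / 2)
    have a2 := h' ((1 - x) / 2) ((1 + x) / 2)
    rw [show (1 + x) / 2 + (1 - x) / 2 = 1 by ring, show (1 + x) / 2 - (1 - x) / 2 = x by ring] at a1
    rw [show (1 - x) / 2 + (1 + x) / 2 = 1 by ring, show (1 - x) / 2 - (1 + x) / 2 = -x by ring] at a2
    have : K * br τ r 1 * (br τ r (-x) + br τ r x) = 0 := by linear_combination -a1 - a2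
    have h3 := (mul_eq_zero.mp this).resolve_left (mul_ne_zero hK h1)
    linear_combination h3
  · intro x y z w
    have : K * K * (br τ r (x + y) * br τ r (x - y) * (br τ r (z + w) * br τ r (z - w))
      - br τ r (x + z) * br τ r (x - z) * (br τ r (y + w) * br τ r (y - w))
      + br τ r (x + w) * br τ r (x - w) * (br τ r (y + z) * br τ r (y - z))) = 0 := by
      have e : ∀ X Y Z T : ℂ, K * K * (X * Y * (Z * T)) = (K * X * Y) * (K * Z * T) := by intros; ring
      rw [mul_add, mul_sub, e, e, e, ← h' x y, ← h' z w, ← h' x z, ← h' y w, ← h' x w, ← h' y z]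
      ring
    exact (mul_eq_zero.mp this).resolve_left (mul_ne_zero hK hK)

def Wp (τ : ℂ) (r : ℝ) : Wt := fun w a b d c => if br τ r (1 + w) = 0 then 0 else Wb τ r w a b d c

def Lw (τ : ℂ) (r : ℝ) : Wt := fun u a b c d => if Adj a b ∧ Adj c d then
  psiStar τ r u 1 d c * psi τ r u 1 a b + psiStar τ r u (-1) d c * psi τ r u (-1) a b else 0

def IsS (s : ℤ) : Prop := s = 1 ∨ s = -1

theorem IsS.neg {s : ℤ} (h : IsS s) : IsS (-s) := by unfold IsS at *; omega
theorem IsS.sq {s : ℤ} (h : IsS s) : (s : ℂ) * s = 1 := by rcases h with rfl | rfl <;> simp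

theorem adjS {a b : ℤ} (h : Adj a b) : ∃ s, IsS s ∧ b = a + s := by
  rcases h with h | h
  · exact ⟨1, Or.inl rfl, h⟩
  · exact ⟨-1, Or.inr rfl, h⟩

theorem adjS2 {a b s : ℤ} (hs : IsS s) (h : Adj a b) : b = a + s ∨ b = a - s := by
  unfold IsS Adj at *; omega

theorem sum2 {M d s : ℤ} (hs : IsS s) (hd : ok M 1 d) (f : ℤ → ℂ) (hf : ∀ x, ¬ Adj d x → f x = 0) :
    ∑ x ∈ Finset.Ioo 0 M, f x = f (d + s) + f (d - s) := by
  have h1 : d + s ≠ d - s := by unfold IsS at *; omega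
  rw [← Finset.sum_pair h1]
  symm
  apply Finset.sum_subset
  · intro x hx
    simp only [Finset.mem_insert, Finset.mem_singleton, Finset.mem_Ioo] at *
    unfold ok IsS at *; push_cast at *; omega
  · intro x _ hx
    apply hf
    simp only [Finset.mem_insert, Finset.mem_singleton] at hx
    unfold Adj; unfold IsS at *; omega

section
variable {τ : ℂ} {r : ℝ} {w : ℂ}

theorem Wp_2 (hD : br τ r (1 + w) ≠ 0) {s a b d c : ℤ} (hs : IsS s) (hb : b = a + s)
    (hd : d = a + s) (hc : c = a + 2 * s) : Wp τ r w a b d c = 1 := by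
  subst hb hd hc
  rcases hs with rfl | rfl <;> simp [Wp, hD, Wb, sub_eq_add_neg]

theorem Wp_0 (h : Br3 (br τ r)) (hD : br τ r (1 + w) ≠ 0) {s a b d c : ℤ} (hs : IsS s) (hb : b = a + s)
    (hd : d = a + s) (hc : c = a) (α : ℂ) (hα : α = s * a) : Wp τ r w a b d c = w0 (br τ r) w α := by
  subst hb hd hc hα
  rcases hs with rfl | rfl
  · have h2 : ¬ (c + 1 = c - 1) := by omega
    simp [Wp, hD, Wb, w0, h2]
  · have e1 := h.sw ((c : ℂ) + w) (-(c : ℂ) - w) (by ring)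
    simp [Wp, hD, Wb, w0, sub_eq_add_neg] at e1 ⊢
    rw [e1, h.odd]
    simp [neg_div_neg_eq]

theorem Wp_1 (h : Br3 (br τ r)) (hD : br τ r (1 + w) ≠ 0) {s a b d c : ℤ} (hs : IsS s) (hb : b = a + s)
    (hd : d = a - s) (hc : c = a) (α : ℂ) (hα : α = s * a) : Wp τ r w a b d c = w1 (br τ r) w α := by
  subst hb hd hc hα
  rcases hs with rfl | rfl
  · have : ¬ (c - 1 = c + 1) := by omega
    have h2 : ¬ (c + 1 = c - 1) := by omega
    simp [Wp, hD, Wb, w1, this, h2]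
  · have e1 := h.sw ((c : ℂ) - 1) (-(c : ℂ) + 1) (by ring)
    have : ¬ (c + 1 = c + -1) := by omega
    have h2 : ¬ (c + -1 = c + 1) := by omega
    simp [Wp, hD, Wb, w1, sub_eq_add_neg, this, h2] at e1 ⊢
    rw [e1, h.odd]
    simp [neg_div_neg_eq]

theorem Wp_z {a b d c : ℤ} (h : ¬ (Adj a b ∧ Adj a d ∧ Adj b c ∧ Adj d c)) : Wp τ r w a b d c = 0 := by
  unfold Adj at h
  unfold Wp
  split_ifs
  · rfl
  unfold Wb
  rw [if_neg (by omega), if_neg (by omega), if_neg (by omega), if_neg (by omega), if_neg (by omega),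
    if_neg (by omega)]

theorem Wp_D (hD : br τ r (1 + w) = 0) {a b d c : ℤ} : Wp τ r w a b d c = 0 := by simp [Wp, hD]

theorem Wp_BA : BA (Wp τ r) := fun w a b d c h => Wp_z (by tauto)
theorem Wp_LRA : LRA (Wp τ r) := fun w a b d c h => Wp_z (by tauto)

theorem Lw_BA : BA (Lw τ r) := fun w a b d c h => by simp [Lw, h]
theorem Lw_t (w : ℂ) (a b d c : ℤ) (h : ¬ Adj a b) : Lw τ r w a b d c = 0 := by simp [Lw, h]

theorem Lw_val (hτ : 0 < τ.im) (hr : 0 < r) (h : Br3 (br τ r)) : ∃ κ : ℂ, ∀ (u : ℂ) (s q a b c d : ℤ)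
    (α γ : ℂ), IsS s → IsS q → b = a + s → d = c + q → α = s * a → γ = q * c →
    Lw τ r u a b c d = ell (br τ r) κ u α γ := by
  obtain ⟨K, hK, hdet⟩ := DET τ r hτ hr
  refine ⟨-(Cc τ r ^ 2 * K / 2), ?_⟩
  intro u s q a b c d α γ hs hq hb hd hα hγ
  subst hb hd hα hγ
  have h1 : Adj a (a + s) := by unfold IsS at *; unfold Adj; omega
  have h2 : Adj c (c + q) := by unfold IsS at *; unfold Adj; omega
  rw [Lw, if_pos ⟨h1, h2⟩, psiStar, psiStar]
  simp only [psi, if_true, neg_neg, show ¬ ((-1 : ℤ) = 1) by norm_num, if_false]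
  have hd := hdet (((a : ℂ) - ((a + s : ℤ) : ℂ)) * u + a) ((((c + q : ℤ) : ℂ) - c) * (u - 1) + ((c + q : ℤ) : ℂ))
  set A := th0 ((((a : ℂ) - ((a + s : ℤ) : ℂ)) * u + a) / (2 * r)) (τ / 2)
  set B := th3 ((((a : ℂ) - ((a + s : ℤ) : ℂ)) * u + a) / (2 * r)) (τ / 2)
  set A' := th0 (((((c + q : ℤ) : ℂ) - c) * (u - 1) + ((c + q : ℤ) : ℂ)) / (2 * r)) (τ / 2)
  set B' := th3 (((((c + q : ℤ) : ℂ) - c) * (u - 1) + ((c + q : ℤ) : ℂ)) / (2 * r)) (τ / 2)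
  have : ell (br τ r) (-(Cc τ r ^ 2 * K / 2)) u (s * a) (q * c) =
      - (q * Cc τ r ^ 2 * (A * B' - B * A') / (2 * br τ r c * br τ r u)) := by
    rw [hd, ell]
    rcases hs with rfl | rfl <;> rcases hq with rfl | rfl <;> push_cast
    · rw [show ((a - (a + 1)) * u + a + ((c + 1 - c) * (u - 1) + (c + 1))) / 2 = ((1 : ℂ) * a + 1 * c) / 2 by ring,
        show ((a - (a + 1)) * u + a - ((c + 1 - c) * (u - 1) + (c + 1))) / 2 = ((1 : ℂ) * a - 1 * c) / 2 - u by ring]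
      simp only [one_mul]; field_simp
    · rw [show ((a - (a + 1)) * u + a + ((c + -1 - c) * (u - 1) + (c + -1))) / 2 = ((1 : ℂ) * a - -1 * c) / 2 - u by ring,
        show ((a - (a + 1)) * u + a - ((c + -1 - c) * (u - 1) + (c + -1))) / 2 = ((1 : ℂ) * a + -1 * c) / 2 by ring]
      rw [h.sw c (-1 * c) (by ring)]; field_simp
    · rw [h.sw ((-1 * a + (1 : ℂ) * c) / 2) (((a - (a + -1)) * u + a - ((c + 1 - c) * (u - 1) + (c + 1))) / 2) (by ring),
        h.sw ((-1 * a - (1 : ℂ) * c) / 2 - u) (((a - (a + -1)) * u + a + ((c + 1 - c) * (u - 1) + (c + 1))) / 2) (by ring)]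
      simp only [one_mul]; field_simp
    · rw [h.sw ((-1 * a + (-1 : ℂ) * c) / 2) (((a - (a + -1)) * u + a + ((c + -1 - c) * (u - 1) + (c + -1))) / 2) (by ring),
        h.sw ((-1 * a - (-1 : ℂ) * c) / 2 - u) (((a - (a + -1)) * u + a - ((c + -1 - c) * (u - 1) + (c + -1))) / 2) (by ring),
        h.sw c (-1 * c) (by ring)]
      field_simp
  rw [this]
  push_cast
  ring

end
end

section
section
variable {τ : ℂ} {r : ℝ}

theorem nz (h : Br3 (br τ r)) (hbr : ∀ s : ℤ, 0 < s → br τ r (s : ℂ) ≠ 0) {s x : ℤ} (hs : IsS s) (hx : 0 < x)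
    (y : ℂ) (hy : y = s * x) : br τ r y ≠ 0 := by
  subst hy
  rcases hs with rfl | rfl
  · simpa using hbr x hx
  · rw [h.sw x _ (by push_cast; ring)]
    simpa using hbr x hx

theorem adjN {a b s : ℤ} (hs : IsS s) (hb : b = a + s) : Adj a b := by unfold IsS at hs; unfold Adj; omega
theorem adjN' {a b s : ℤ} (hs : IsS s) (hb : b = a - s) : Adj a b := by unfold IsS at hs; unfold Adj; omega
theorem adjC {a b : ℤ} (h : Adj a b) : Adj b a := by unfold Adj at *; omega
theorem adj2 {a b s : ℤ} (hs : IsS s) (hb : b = a + 3 * s) : ¬ Adj a b := by unfold IsS at hs; unfold Adj; omega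

theorem Wp_Ex_aux (h : Br3 (br τ r)) (hbr : ∀ s : ℤ, 0 < s → br τ r (s : ℂ) ≠ 0) {M : ℤ} (w : ℂ) {s : ℤ} (hs : IsS s)
    (a d c : ℤ) (ha : ok M 1 a) (hd : ok M 1 d) (hda : d = a + s) :
    ∑ d1 ∈ Finset.Ioo 0 M, Wp τ r (w + 1) a (a + s) d d1 * Wp τ r w (a + s) a d1 c =
    ∑ d1 ∈ Finset.Ioo 0 M, Wp τ r (w + 1) a (a - s) d d1 * Wp τ r w (a - s) a d1 c := by
  by_cases D1 : br τ r (1 + (w + 1)) = 0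
  · simp [Wp_D D1]
  by_cases D2 : br τ r (1 + w) = 0
  · simp [Wp_D D2]
  by_cases hc : Adj a c
  swap
  · rw [Finset.sum_eq_zero, Finset.sum_eq_zero]
    · intro x _; rw [Wp_LRA w _ _ _ _ (by tauto), mul_zero]
    · intro x _; rw [Wp_LRA w _ _ _ _ (by tauto), mul_zero]
  rw [sum2 hs hd _ (by intro x hx; rw [Wp_BA _ _ _ _ _ hx, zero_mul]),
    sum2 hs hd _ (by intro x hx; rw [Wp_BA _ _ _ _ _ hx, zero_mul])]
  subst hda
  have n0 := nz h hbr hs (show 0 < a by unfold ok at ha; push_cast at *; omega) (s * a) rfl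
  have n1 := nz h hbr hs (show 0 < a + s by unfold ok at hd; push_cast at *; omega) (s * a + 1)
    (by push_cast; linear_combination -hs.sq)
  have n2 := nz h hbr hs (show 0 < a - s by unfold ok IsS at *; push_cast at *; omega) (s * a - 1)
    (by push_cast; linear_combination hs.sq)
  rcases adjS2 hs hc with hc | hc <;> subst hc
  · rw [add_sub_cancel_right, Wp_2 (a := a) (b := a + s) (d := a + s) (c := a + s + s) D1 hs (by ring) (by ring) (by ring),
      Wp_1 (a := a + s) (b := a) (d := a + s + s) (c := a + s) h D2 hs.neg (by ring) (by ring) (by ring) (-(s * a) - 1) (by push_cast; linear_combination hs.sq),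
      Wp_0 (a := a) (b := a + s) (d := a + s) (c := a) h D1 hs (by ring) (by ring) (by ring) (s * a) rfl,
      Wp_0 (a := a + s) (b := a) (d := a) (c := a + s) h D2 hs.neg (by ring) (by ring) (by ring) (-(s * a) - 1) (by push_cast; linear_combination hs.sq),
      Wp_z (a := a) (b := a - s) (d := a + s) (c := a + s + s) (w := w + 1) (by intro hh; exact adj2 hs (by ring) hh.2.2.1),
      Wp_1 (a := a) (b := a - s) (d := a + s) (c := a) h D1 hs.neg (by ring) (by ring) (by ring) (-(s * a)) (by push_cast; ring),
      Wp_2 (a := a - s) (b := a) (d := a) (c := a + s) D2 hs (by ring) (by ring) (by ring)]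
    generalize (s : ℂ) * a = α at *
    unfold w0 w1
    have E := ex1 h w α
    rw [h.sw α (-α) rfl, h.sw (α + 1) (-α - 1) (by ring), h.sw (α - 1) (-α + 1) (by ring), h.sw α (-α - 1 + 1) (by ring),
      h.sw (α + (w + 1)) (-α - 1 - w) (by ring)]
    rw [show 1 + (w + 1) = w + 2 by ring, show 1 + w = w + 1 by ring] at *
    field_simp
    linear_combination E
  · rw [add_sub_cancel_right, Wp_z (a := a + s) (b := a) (d := a + s + s) (c := a - s) (w := w) (by intro hh; exact adj2 hs.neg (by ring) hh.2.2.2),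
      Wp_0 (a := a) (b := a + s) (d := a + s) (c := a) h D1 hs (by ring) (by ring) (by ring) (s * a) rfl,
      Wp_2 (a := a + s) (b := a) (d := a) (c := a - s) D2 hs.neg (by ring) (by ring) (by ring),
      Wp_z (a := a) (b := a - s) (d := a + s) (c := a + s + s) (w := w + 1) (by intro hh; exact adj2 hs (by ring) hh.2.2.1),
      Wp_1 (a := a) (b := a - s) (d := a + s) (c := a) h D1 hs.neg (by ring) (by ring) (by ring) (-(s * a)) (by push_cast; ring),
      Wp_0 (a := a - s) (b := a) (d := a) (c := a - s) h D2 hs (by ring) (by ring) (by ring) (s * a - 1) (by push_cast; linear_combination hs.sq)]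
    generalize (s : ℂ) * a = α at *
    unfold w0 w1
    rw [h.sw α (-α) rfl, h.sw (α - 1) (-α + 1) (by ring)]
    rw [show 1 + (w + 1) = w + 2 by ring, show 1 + w = w + 1 by ring, show α - 1 - w = α - (w + 1) by ring] at *
    field_simp
    ring

theorem Wp_Ex (h : Br3 (br τ r)) (hbr : ∀ s : ℤ, 0 < s → br τ r (s : ℂ) ≠ 0) (M : ℤ) : Ex M 1 (Wp τ r) := by
  intro w a d c ha hd
  by_cases had : Adj a d
  · rcases had with e | e
    · exact Wp_Ex_aux h hbr w (Or.inl rfl) a d c ha hd e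
    · have := Wp_Ex_aux h hbr w (s := -1) (Or.inr rfl) a d c ha hd e
      rw [sub_neg_eq_add] at this
      exact this.symm
  · rw [Finset.sum_eq_zero, Finset.sum_eq_zero]
    · intro x _; rw [Wp_LRA (w + 1) _ _ _ _ (by tauto), zero_mul]
    · intro x _; rw [Wp_LRA (w + 1) _ _ _ _ (by tauto), zero_mul]

theorem Wp_RE_aux (h : Br3 (br τ r)) (hbr : ∀ s : ℤ, 0 < s → br τ r (s : ℂ) ≠ 0) {M : ℤ} (w : ℂ) {s : ℤ} (hs : IsS s)
    (h0 h2 e : ℤ) (ha : ok M 1 h0) (he : h0 = e + s) :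
    ∑ h1 ∈ Finset.Ioo 0 M, Wp τ r w h0 e h1 (e + s) * Wp τ r (w + 1) h1 (e + s) h2 e =
    ∑ h1 ∈ Finset.Ioo 0 M, Wp τ r w h0 e h1 (e - s) * Wp τ r (w + 1) h1 (e - s) h2 e := by
  by_cases D1 : br τ r (1 + (w + 1)) = 0
  · simp [Wp_D D1]
  by_cases D2 : br τ r (1 + w) = 0
  · simp [Wp_D D2]
  by_cases hc : Adj e h2
  swap
  · rw [Finset.sum_eq_zero, Finset.sum_eq_zero]
    · intro x _; rw [Wp_BA (w + 1) _ _ _ _ (fun hh => hc (adjC hh)), mul_zero]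
    · intro x _; rw [Wp_BA (w + 1) _ _ _ _ (fun hh => hc (adjC hh)), mul_zero]
  rw [sum2 hs ha _ (by intro x hx; rw [Wp_LRA w _ _ _ _ (by tauto), zero_mul]),
    sum2 hs ha _ (by intro x hx; rw [Wp_LRA w _ _ _ _ (by tauto), zero_mul])]
  subst he
  have n0 := nz h hbr hs (show 0 < e by unfold ok IsS at *; push_cast at *; omega) (s * e) rfl
  have n1 := nz h hbr hs (show 0 < e + s by unfold ok at ha; push_cast at *; omega) (s * e + 1)
    (by push_cast; linear_combination -hs.sq)
  rcases adjS2 hs hc with hc | hc <;> subst hc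
  · rw [add_sub_cancel_right, Wp_1 (a := e + s) (b := e) (d := e + s + s) (c := e + s) h D2 hs.neg (by ring) (by ring) (by ring) (-(s * e) - 1) (by push_cast; linear_combination hs.sq),
      Wp_2 (a := e + s + s) (b := e + s) (d := e + s) (c := e) D1 hs.neg (by ring) (by ring) (by ring),
      Wp_0 (a := e + s) (b := e) (d := e) (c := e + s) h D2 hs.neg (by ring) (by ring) (by ring) (-(s * e) - 1) (by push_cast; linear_combination hs.sq),
      Wp_0 (a := e) (b := e + s) (d := e + s) (c := e) h D1 hs (by ring) (by ring) (by ring) (s * e) rfl,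
      Wp_z (a := e + s) (b := e) (d := e + s + s) (c := e - s) (w := w) (by intro hh; exact adj2 hs.neg (by ring) hh.2.2.2),
      Wp_2 (a := e + s) (b := e) (d := e) (c := e - s) D2 hs.neg (by ring) (by ring) (by ring),
      Wp_1 (a := e) (b := e - s) (d := e + s) (c := e) h D1 hs.neg (by ring) (by ring) (by ring) (-(s * e)) (by push_cast; ring)]
    generalize (s : ℂ) * e = α at *
    unfold w0 w1
    have E := ex1 h w α
    rw [h.sw α (-α) rfl, h.sw (α + 1) (-α - 1) (by ring), h.sw (α - 1) (-α + 1) (by ring), h.sw α (-α - 1 + 1) (by ring),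
      h.sw (α + (w + 1)) (-α - 1 - w) (by ring)]
    rw [show 1 + (w + 1) = w + 2 by ring, show 1 + w = w + 1 by ring] at *
    field_simp
    linear_combination E
  · rw [add_sub_cancel_right, Wp_z (a := e + s + s) (b := e + s) (d := e - s) (c := e) (w := w + 1) (by intro hh; exact adj2 hs.neg (by ring) hh.2.1),
      Wp_0 (a := e + s) (b := e) (d := e) (c := e + s) h D2 hs.neg (by ring) (by ring) (by ring) (-(s * e) - 1) (by push_cast; linear_combination hs.sq),
      Wp_1 (a := e) (b := e + s) (d := e - s) (c := e) h D1 hs (by ring) (by ring) (by ring) (s * e) rfl,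
      Wp_z (a := e + s) (b := e) (d := e + s + s) (c := e - s) (w := w) (by intro hh; exact adj2 hs.neg (by ring) hh.2.2.2),
      Wp_2 (a := e + s) (b := e) (d := e) (c := e - s) D2 hs.neg (by ring) (by ring) (by ring),
      Wp_0 (a := e) (b := e - s) (d := e - s) (c := e) h D1 hs.neg (by ring) (by ring) (by ring) (-(s * e)) (by push_cast; ring)]
    generalize (s : ℂ) * e = α at *
    unfold w0 w1
    rw [h.sw α (-α) rfl, h.sw (α + 1) (-α - 1) (by ring), 
      h.sw (α + (w + 1)) (-α - 1 - w) (by ring), h.sw (α + (w + 1)) (-α - (w + 1)) (by ring)]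
    rw [show 1 + (w + 1) = w + 2 by ring, show 1 + w = w + 1 by ring] at *
    field_simp
    try ring

theorem Wp_RE (h : Br3 (br τ r)) (hbr : ∀ s : ℤ, 0 < s → br τ r (s : ℂ) ≠ 0) (M : ℤ) : RE M (Wp τ r) := by
  intro w h0 h2 e ha
  by_cases had : Adj e h0
  · rcases had with e' | e'
    · exact Wp_RE_aux h hbr w (Or.inl rfl) h0 h2 e ha e'
    · have := Wp_RE_aux h hbr w (s := -1) (Or.inr rfl) h0 h2 e ha e'
      rw [sub_neg_eq_add] at this
      exact this.symm
  · have had' : ¬ Adj h0 e := fun hh => had (adjC hh)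
    rw [Finset.sum_eq_zero, Finset.sum_eq_zero]
    · intro x _; rw [Wp_z (by tauto), zero_mul]
    · intro x _; rw [Wp_z (by tauto), zero_mul]

end
end

section
section
variable {τ : ℂ} {r : ℝ}

theorem Lw_Ex (hτ : 0 < τ.im) (hr : 0 < r) (h : Br3 (br τ r)) (hbr : ∀ s : ℤ, 0 < s → br τ r (s : ℂ) ≠ 0) (M : ℤ) :
    Ex M 1 (Lw τ r) := by
  intro w a d c ha hd
  obtain ⟨κ, V⟩ := Lw_val hτ hr h
  have p1 : IsS 1 := Or.inl rfl
  by_cases hc : c = d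
  · subst hc
    rw [sum2 p1 hd _ (by intro x hx; rw [Lw_BA _ _ _ _ _ hx, zero_mul]),
      sum2 p1 hd _ (by intro x hx; rw [Lw_BA _ _ _ _ _ hx, zero_mul])]
    rw [V (w + 1) 1 1 a (a + 1) c (c + 1) a c p1 p1 rfl rfl (by simp) (by simp),
      V w (-1) (-1) (a + 1) a (c + 1) c (-a - 1) (-c - 1) p1.neg p1.neg (by ring) (by ring) (by push_cast; ring) (by push_cast; ring),
      V (w + 1) 1 (-1) a (a + 1) c (c - 1) a (-c) p1 p1.neg rfl rfl (by simp) (by simp),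
      V w (-1) 1 (a + 1) a (c - 1) c (-a - 1) (c - 1) p1.neg p1 (by ring) (by ring) (by push_cast; ring) (by push_cast; ring),
      V (w + 1) (-1) 1 a (a - 1) c (c + 1) (-a) c p1.neg p1 rfl rfl (by simp) (by simp),
      V w 1 (-1) (a - 1) a (c + 1) c (a - 1) (-c - 1) p1 p1.neg (by ring) (by ring) (by push_cast; ring) (by push_cast; ring),
      V (w + 1) (-1) (-1) a (a - 1) c (c - 1) (-a) (-c) p1.neg p1.neg rfl rfl (by simp) (by simp),
      V w 1 1 (a - 1) a (c - 1) c (a - 1) (c - 1) p1 p1 (by ring) (by ring) (by push_cast; ring) (by push_cast; ring)]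
    unfold ok at hd
    push_cast at hd
    exact ellEx0 h κ w a c (hbr c (by omega)) (by exact_mod_cast hbr (c + 1) (by omega))
      (by exact_mod_cast hbr (c - 1) (by omega))
  by_cases hq : ∃ q, IsS q ∧ c = d + 2 * q
  · obtain ⟨q, hq, rfl⟩ := hq
    rw [sum2 hq hd _ (by intro x hx; rw [Lw_BA _ _ _ _ _ hx, zero_mul]),
      sum2 hq hd _ (by intro x hx; rw [Lw_BA _ _ _ _ _ hx, zero_mul])]
    rw [Lw_BA w _ _ (d - q) (d + 2 * q) (adj2 hq (by ring)), Lw_BA w _ _ (d - q) (d + 2 * q) (adj2 hq (by ring))]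
    rw [V (w + 1) 1 q a (a + 1) d (d + q) a (q * d) p1 hq rfl rfl (by simp) (by simp),
      V w (-1) q (a + 1) a (d + q) (d + 2 * q) (-a - 1) (q * d + 1) p1.neg hq (by ring) (by ring) (by push_cast; ring) (by push_cast; linear_combination -hq.sq),
      V (w + 1) (-1) q a (a - 1) d (d + q) (-a) (q * d) p1.neg hq rfl rfl (by simp) (by simp),
      V w 1 q (a - 1) a (d + q) (d + 2 * q) (a - 1) (q * d + 1) p1 hq (by ring) (by ring) (by push_cast; ring) (by push_cast; linear_combination -hq.sq)]
    rw [mul_zero, mul_zero, add_zero, add_zero]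
    exact ellEx2 κ w a _
  · have key : ∀ x, ¬ (Adj d x ∧ Adj x c) := by
      rintro x ⟨h1, h2⟩
      apply hq
      by_cases h3 : c = d + 2
      · exact ⟨1, p1, by omega⟩
      · exact ⟨-1, p1.neg, by unfold Adj at *; omega⟩
    rw [Finset.sum_eq_zero, Finset.sum_eq_zero]
    · intro x _
      by_cases h1 : Adj d x
      · rw [Lw_BA w _ _ x c (fun h2 => key x ⟨h1, h2⟩), mul_zero]
      · rw [Lw_BA (w + 1) _ _ d x h1, zero_mul]
    · intro x _
      by_cases h1 : Adj d x
      · rw [Lw_BA w _ _ x c (fun h2 => key x ⟨h1, h2⟩), mul_zero]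
      · rw [Lw_BA (w + 1) _ _ d x h1, zero_mul]

theorem YB1 (hτ : 0 < τ.im) (hr : 0 < r) (h : Br3 (br τ r)) (hbr : ∀ s : ℤ, 0 < s → br τ r (s : ℂ) ≠ 0) (M : ℤ)
    (u v : ℂ) (a b g f c e : ℤ) (hab : Adj a b) (ha : ok M 1 a) (hg : ok M 1 g) (hf : ok M 1 f) :
    ∑ d ∈ Finset.Ioo 0 M, Lw τ r v a d g f * Wp τ r (u - v) a b d c * Lw τ r u d c f e =
    ∑ d ∈ Finset.Ioo 0 M, Lw τ r u a b g d * Wp τ r (u - v) g d f e * Lw τ r v b c d e := by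
  obtain ⟨κ, V⟩ := Lw_val hτ hr h
  by_cases hbc : Adj b c
  swap
  · rw [Finset.sum_eq_zero, Finset.sum_eq_zero]
    · intro x _; rw [Lw_t v _ _ _ _ hbc, mul_zero]
    · intro x _; rw [Wp_z (w := u - v) (by tauto), mul_zero, zero_mul]
  by_cases hgf : Adj g f
  swap
  · rw [Finset.sum_eq_zero, Finset.sum_eq_zero]
    · intro x _; rw [Wp_z (w := u - v) (by tauto), mul_zero, zero_mul]
    · intro x _; rw [Lw_BA v _ _ _ _ hgf, zero_mul, zero_mul]
  by_cases hfe : Adj f e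
  swap
  · rw [Finset.sum_eq_zero, Finset.sum_eq_zero]
    · intro x _; rw [Wp_z (w := u - v) (by tauto), mul_zero, zero_mul]
    · intro x _; rw [Lw_BA u _ _ _ _ hfe, mul_zero]
  by_cases D : br τ r (1 + (u - v)) = 0
  · simp [Wp_D D]
  obtain ⟨s, hs, rfl⟩ := adjS hab
  obtain ⟨q, hq, rfl⟩ := adjS hgf
  rw [sum2 hs ha _ (by intro x hx; rw [Lw_t v _ _ _ _ hx, zero_mul, zero_mul]),
    sum2 hq hg _ (by intro x hx; rw [Lw_BA u _ _ _ _ hx, zero_mul, zero_mul])]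
  have nα := nz h hbr hs (show 0 < a by unfold ok at ha; push_cast at *; omega) (s * a) rfl
  have nγ := nz h hbr hq (show 0 < g by unfold ok at hg; push_cast at *; omega) (q * g) rfl
  have nγ1 := nz h hbr hq (show 0 < g + q by unfold ok at hf; push_cast at *; omega) (q * g + 1)
    (by push_cast; linear_combination -hq.sq)
  have nγ2 := nz h hbr hq (show 0 < g - q by unfold ok IsS at *; push_cast at *; omega) (q * g - 1)
    (by push_cast; linear_combination hq.sq)
  have L1 : ∀ w, Lw τ r w a (a + s) g (g + q) = ell (br τ r) κ w (s * a) (q * g) := fun w =>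
    V w s q _ _ _ _ _ _ hs hq (by ring) (by ring) (by push_cast; ring) (by push_cast; ring)
  have L2 : ∀ w, Lw τ r w a (a - s) g (g + q) = ell (br τ r) κ w (-(s * a)) (q * g) := fun w =>
    V w (-s) q _ _ _ _ _ _ hs.neg hq (by ring) (by ring) (by push_cast; ring) (by push_cast; ring)
  have L3 : ∀ w, Lw τ r w a (a + s) g (g - q) = ell (br τ r) κ w (s * a) (-(q * g)) := fun w =>
    V w s (-q) _ _ _ _ _ _ hs hq.neg (by ring) (by ring) (by push_cast; ring) (by push_cast; ring)
  have T0 : br τ r u = 0 ∨ br τ r v = 0 → ∀ α γ α' γ' α'' γ'' α''' γ''' x y, ell (br τ r) κ v α γ * x * ell (br τ r) κ u α' γ'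
    = ell (br τ r) κ u α'' γ'' * y * ell (br τ r) κ v α''' γ''' := by
    rintro (hh | hh) <;> intros <;> simp [ell, hh]
  rcases adjS2 hs hbc with hc | hc <;> rcases adjS2 hq hfe with he | he
  · subst hc he
    rw [Wp_z (a := a) (b := a + s) (d := a - s) (w := u - v) (by intro hh; exact adj2 hs (by ring) hh.2.2.2),
      Wp_z (a := g) (b := g - q) (d := g + q) (w := u - v) (by intro hh; exact adj2 hq (by ring) hh.2.2.1),
      Wp_2 (a := a) D hs rfl rfl (by ring), Wp_2 (a := g) D hq rfl rfl (by ring)]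
    have L4 : ∀ w, Lw τ r w (a + s) (a + s + s) (g + q) (g + q + q) = ell (br τ r) κ w (s * a + 1) (q * g + 1) := fun w =>
      V w s q _ _ _ _ _ _ hs hq (by ring) (by ring) (by push_cast; linear_combination -hs.sq) (by push_cast; linear_combination -hq.sq)
    simp only [L1, L4, mul_zero, zero_mul, add_zero, mul_one]
    exact yA κ u v _ _
  · rw [add_sub_cancel_right] at he
    subst hc; subst he
    rw [Wp_z (a := a) (b := a + s) (d := a - s) (w := u - v) (by intro hh; exact adj2 hs (by ring) hh.2.2.2),
      Wp_2 (a := a) D hs rfl rfl (by ring), Wp_0 (a := e) (b := e + q) (d := e + q) (c := e) h D hq rfl rfl rfl (q * e) rfl,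
      Wp_1 (a := e) (b := e - q) (d := e + q) (c := e) h D hq.neg (by ring) (by ring) rfl (-(q * e)) (by push_cast; ring)]
    have L4 : ∀ w, Lw τ r w (a + s) (a + s + s) (e + q) e = ell (br τ r) κ w (s * a + 1) (-(q * e) - 1) := fun w =>
      V w s (-q) _ _ _ _ _ _ hs hq.neg (by ring) (by ring) (by push_cast; linear_combination -hs.sq) (by push_cast; linear_combination hq.sq)
    have L5 : ∀ w, Lw τ r w (a + s) (a + s + s) (e - q) e = ell (br τ r) κ w (s * a + 1) (q * e - 1) := fun w =>
      V w s q _ _ _ _ _ _ hs hq (by ring) (by ring) (by push_cast; linear_combination -hs.sq) (by push_cast; linear_combination hq.sq)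
    simp only [L1, L3, L4, L5, mul_zero, zero_mul, add_zero, mul_one]
    by_cases hu : br τ r u = 0
    · simp [ell, hu]
    by_cases hv : br τ r v = 0
    · simp [ell, hv]
    exact yB h κ u v _ _ nγ nγ1 nγ2 D hu hv
  · rw [add_sub_cancel_right] at hc
    subst he; subst hc
    rw [Wp_z (a := g) (b := g - q) (d := g + q) (w := u - v) (by intro hh; exact adj2 hq (by ring) hh.2.2.1),
      Wp_2 (a := g) D hq rfl rfl (by ring), Wp_0 (a := c) (b := c + s) (d := c + s) (c := c) h D hs rfl rfl rfl (s * c) rfl,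
      Wp_1 (a := c) (b := c + s) (d := c - s) (c := c) h D hs (by ring) (by ring) rfl (s * c) rfl]
    have L4 : ∀ w, Lw τ r w (c + s) c (g + q) (g + q + q) = ell (br τ r) κ w (-(s * c) - 1) (q * g + 1) := fun w =>
      V w (-s) q _ _ _ _ _ _ hs.neg hq (by ring) (by ring) (by push_cast; linear_combination hs.sq) (by push_cast; linear_combination -hq.sq)
    have L5 : ∀ w, Lw τ r w (c - s) c (g + q) (g + q + q) = ell (br τ r) κ w (s * c - 1) (q * g + 1) := fun w =>
      V w s q _ _ _ _ _ _ hs hq (by ring) (by ring) (by push_cast; linear_combination hs.sq) (by push_cast; linear_combination -hq.sq)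
    simp only [L1, L2, L4, L5, mul_zero, zero_mul, add_zero, mul_one]
    exact yC h κ u v _ _ nα D
  · rw [add_sub_cancel_right] at hc he
    subst he; subst hc
    rw [Wp_0 (a := c) (b := c + s) (d := c + s) (c := c) h D hs rfl rfl rfl (s * c) rfl,
      Wp_1 (a := c) (b := c + s) (d := c - s) (c := c) h D hs (by ring) (by ring) rfl (s * c) rfl,
      Wp_0 (a := e) (b := e + q) (d := e + q) (c := e) h D hq rfl rfl rfl (q * e) rfl,
      Wp_1 (a := e) (b := e - q) (d := e + q) (c := e) h D hq.neg (by ring) (by ring) rfl (-(q * e)) (by push_cast; ring)]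
    have L4 : ∀ w, Lw τ r w (c + s) c (e + q) e = ell (br τ r) κ w (-(s * c) - 1) (-(q * e) - 1) := fun w =>
      V w (-s) (-q) _ _ _ _ _ _ hs.neg hq.neg (by ring) (by ring) (by push_cast; linear_combination hs.sq) (by push_cast; linear_combination hq.sq)
    have L5 : ∀ w, Lw τ r w (c - s) c (e + q) e = ell (br τ r) κ w (s * c - 1) (-(q * e) - 1) := fun w =>
      V w s (-q) _ _ _ _ _ _ hs hq.neg (by ring) (by ring) (by push_cast; linear_combination hs.sq) (by push_cast; linear_combination hq.sq)
    have L6 : ∀ w, Lw τ r w (c + s) c (e - q) e = ell (br τ r) κ w (-(s * c) - 1) (q * e - 1) := fun w =>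
      V w (-s) q _ _ _ _ _ _ hs.neg hq (by ring) (by ring) (by push_cast; linear_combination hs.sq) (by push_cast; linear_combination hq.sq)
    simp only [L1, L2, L3, L4, L5, L6]
    by_cases hu : br τ r u = 0
    · simp [ell, hu]
    by_cases hv : br τ r v = 0
    · simp [ell, hv]
    exact yD h κ u v _ _ nα nγ nγ1 nγ2 D hu hv

end
end

section
section
variable {τ : ℂ} {r : ℝ}

def PSl (τ : ℂ) (r : ℝ) (u : ℂ) : List Bool → ℤ → ℤ → ℂ
  | [], d, c => if d = c then 1 else 0
  | e :: t, d, c => psiStar τ r (u + t.length) (sg e) (d + 1) d * PSl τ r u t (d + 1) c +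
      psiStar τ r (u + t.length) (sg e) (d - 1) d * PSl τ r u t (d - 1) c

def Pl (τ : ℂ) (r : ℝ) (u : ℂ) : List Bool → ℤ → ℤ → ℂ
  | [], _, _ => 1
  | e :: t, a, b => psi τ r (u + t.length) (sg e) a (nx t.length a b) * Pl τ r u t (nx t.length a b) b

theorem sumCons {n : ℕ} (F : (Fin (n + 1) → Bool) → ℂ) :
    ∑ ε, F ε = ∑ ε : Fin n → Bool, (F (Fin.cons true ε) + F (Fin.cons false ε)) := by
  rw [← (Fin.consEquiv (fun _ : Fin (n + 1) => Bool)).sum_comp, Fintype.sum_prod_type_right]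
  simp [Fin.consEquiv]

theorem Fu_Lw {M : ℤ} (u : ℂ) (n : ℕ) (a b d c : ℤ) (hab : adm n a b) (hd : ok M n d) :
    Fu M (Lw τ r) u n a b d c = ∑ ε : Fin n → Bool, PSl τ r u (List.ofFn ε) d c * Pl τ r u (List.ofFn ε) a b := by
  induction n generalizing a d with
  | zero =>
    have : a = b := by unfold adm at hab; omega
    simp [Fu, PSl, Pl, this]
  | succ n ih =>
    have hd1 : ok M 1 d := by unfold ok at *; push_cast at *; omega
    rw [Fu, if_pos hab, sum2 (Or.inl rfl : IsS 1) hd1 _ (by intro x hx; rw [Lw_BA _ _ _ _ _ hx, zero_mul]),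
      ih _ _ (nx_adm n a b hab) (by unfold ok at *; push_cast at *; omega),
      ih _ _ (nx_adm n a b hab) (by unfold ok at *; push_cast at *; omega), sumCons]
    have h1 := nx_adj n a b
    have h2 : Adj d (d + 1) := Or.inl rfl
    have h3 : Adj d (d - 1) := Or.inr rfl
    rw [Finset.mul_sum, Finset.mul_sum, ← Finset.sum_add_distrib]
    apply Finset.sum_congr rfl
    intro ε _
    simp only [List.ofFn_succ, Fin.cons_zero, Fin.cons_succ, PSl, Pl, List.length_ofFn, sg, Lw, h1, h2, h3, and_self, if_true,
      Bool.false_eq_true, if_false]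
    ring

theorem cp_shift (n : ℕ) (a b : ℤ) (h : adm (n + 1) a b) (j : ℕ) :
    cpathZ a ((((n + 1 : ℕ) : ℤ) - (a - b)) / 2) (j + 1) = cpathZ (nx n a b) (((n : ℤ) - (nx n a b - b)) / 2) j := by
  unfold cpathZ nx
  unfold adm at *
  push_cast at *
  split_ifs <;> omega

theorem cp_zero (n : ℕ) (a b : ℤ) (h : adm n a b) :
    cpathZ a (((n : ℤ) - (a - b)) / 2) 0 = a := by
  unfold cpathZ
  unfold adm at *
  push_cast at *
  split_ifs <;> omega

theorem Pl_eq (u : ℂ) (n : ℕ) (a b : ℤ) (hab : adm n a b) (ε : Fin n → Bool) :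
    ∏ j : Fin n,
        psi τ r (u + (n : ℂ) - (((j : ℕ) + 1 : ℕ) : ℂ)) (sg (ε j))
          (cpathZ a (((n : ℤ) - (a - b)) / 2) (j : ℕ))
          (cpathZ a (((n : ℤ) - (a - b)) / 2) ((j : ℕ) + 1)) = Pl τ r u (List.ofFn ε) a b := by
  induction n generalizing a with
  | zero => simp [Pl]
  | succ n ih =>
    rw [Fin.prod_univ_succ, List.ofFn_succ, Pl, ← ih _ (by simpa using nx_adm n a b hab)]
    simp only [List.length_ofFn]
    congr 1
    · rw [show ((0 : Fin (n + 1)) : ℕ) = 0 from rfl, cp_zero _ _ _ hab, cp_shift _ _ _ hab, cp_zero _ _ _ (nx_adm n a b hab)]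
      congr 1; push_cast; ring
    · apply Finset.prod_congr rfl
      intro j _
      rw [Fin.val_succ, cp_shift _ _ _ hab, cp_shift _ _ _ hab]
      congr 1; push_cast; ring

theorem sp_zero (k : ℕ) (a : ℤ) (δ : Fin k → Bool) : spath k a δ 0 = a := by simp [spath]

theorem sp_cons (n : ℕ) (a : ℤ) (e : Bool) (δ : Fin n → Bool) (j : ℕ) :
    spath (n + 1) a (Fin.cons e δ) (j + 1) = spath n (a + sg e) δ j := by
  unfold spath
  rw [Finset.sum_range_succ']
  have : ∀ i ∈ Finset.range j, (if h : i + 1 < n + 1 then sg ((Fin.cons e δ : Fin (n + 1) → Bool) ⟨i + 1, h⟩) else 0)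
    = if h : i < n then sg (δ ⟨i, h⟩) else 0 := by
    intro i _
    by_cases h : i < n
    · rw [dif_pos h, dif_pos (by omega)]; rfl
    · rw [dif_neg h, dif_neg (by omega)]
  rw [Finset.sum_congr rfl this]
  simp
  ring

theorem PS_eq (u : ℂ) (n : ℕ) (d c : ℤ) (ε : Fin n → Bool) :
    ∑ δ : Fin n → Bool, (if (∑ j, sg (δ j)) = c - d then
      ∏ j : Fin n,
        psiStar τ r (u + (n : ℂ) - (((j : ℕ) + 1 : ℕ) : ℂ)) (sg (ε j))
          (spath n d δ ((j : ℕ) + 1)) (spath n d δ (j : ℕ)) else 0) = PSl τ r u (List.ofFn ε) d c := by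
  induction n generalizing d with
  | zero => simp [PSl, sub_eq_zero, eq_comm]
  | succ n ih =>
    rw [sumCons, List.ofFn_succ, PSl, ← ih, ← ih, Finset.mul_sum, Finset.mul_sum, Finset.sum_add_distrib]
    simp only [List.length_ofFn]
    congr 1
    · apply Finset.sum_congr rfl
      intro δ _
      rw [Fin.sum_univ_succ, Fin.prod_univ_succ]
      simp only [Fin.cons_zero, Fin.cons_succ, Fin.val_succ, sp_cons, Fin.val_zero, sp_zero, mul_ite, mul_zero]
      have e1 : sg true = 1 := rfl
      rw [e1]
      congr 1
      · apply propext; constructor <;> intro h <;> omega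
      · congr 1
        · congr 1; push_cast; ring
        · apply Finset.prod_congr rfl
          intro j _
          congr 1; push_cast; ring
    · apply Finset.sum_congr rfl
      intro δ _
      rw [Fin.sum_univ_succ, Fin.prod_univ_succ]
      simp only [Fin.cons_zero, Fin.cons_succ, Fin.val_succ, sp_cons, Fin.val_zero, sp_zero, mul_ite, mul_zero]
      have e1 : sg false = -1 := rfl
      rw [e1]
      congr 1
      · apply propext; constructor <;> intro h <;> omega
      · congr 1
        · congr 1; push_cast; ring
        · apply Finset.prod_congr rfl
          intro j _
          congr 1; push_cast; ring

end
end

section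
section
variable {τ : ℂ} {r : ℝ}

theorem Dsym (hτ : 0 < τ.im) (hr : 0 < r) (h : Br3 (br τ r)) (hbr : ∀ s : ℤ, 0 < s → br τ r (s : ℂ) ≠ 0)
    (w : ℂ) (d : ℤ) (hd : 1 < d) :
    psiStar τ r (w + 1) 1 (d + 1) d * psiStar τ r w (-1) d (d + 1) + psiStar τ r (w + 1) 1 (d - 1) d * psiStar τ r w (-1) d (d - 1)
    = psiStar τ r (w + 1) (-1) (d + 1) d * psiStar τ r w 1 d (d + 1) + psiStar τ r (w + 1) (-1) (d - 1) d * psiStar τ r w 1 d (d - 1) := by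
  obtain ⟨K, hK, hdet⟩ := DET τ r hτ hr
  have E1 := hdet (w + d + 1) (d - w + 1)
  have E2 := hdet (-w + d - 1) (w + d - 1)
  rw [show (w + d + 1 + (d - w + 1)) / 2 = ((d + 1 : ℤ) : ℂ) by push_cast; ring, show (w + d + 1 - (d - w + 1)) / 2 = w by ring] at E1
  rw [show (-w + d - 1 + (w + d - 1)) / 2 = ((d - 1 : ℤ) : ℂ) by push_cast; ring, show (-w + d - 1 - (w + d - 1)) / 2 = -w by ring,
    h.odd] at E2
  have n1 := hbr (d + 1) (by omega)
  have n2 := hbr (d - 1) (by omega)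
  simp only [psiStar, psi, neg_neg, show ¬ ((-1 : ℤ) = 1) by norm_num, if_true, if_false]
  rw [show (((d + 1 : ℤ) : ℂ) - d) * (w + 1 - 1) + ((d + 1 : ℤ) : ℂ) = w + d + 1 by push_cast; ring,
    show ((d : ℂ) - ((d + 1 : ℤ) : ℂ)) * (w - 1) + (d : ℂ) = d - w + 1 by push_cast; ring,
    show (((d - 1 : ℤ) : ℂ) - d) * (w + 1 - 1) + ((d - 1 : ℤ) : ℂ) = -w + d - 1 by push_cast; ring,
    show ((d : ℂ) - ((d - 1 : ℤ) : ℂ)) * (w - 1) + (d : ℂ) = w + d - 1 by push_cast; ring,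
    show (((d + 1 : ℤ) : ℂ) - d) = 1 by push_cast; ring, show ((d : ℂ) - ((d + 1 : ℤ) : ℂ)) = -1 by push_cast; ring,
    show (((d - 1 : ℤ) : ℂ) - d) = -1 by push_cast; ring, show ((d : ℂ) - ((d - 1 : ℤ) : ℂ)) = 1 by push_cast; ring]
  generalize th0 ((w + d + 1) / (2 * r)) (τ / 2) = A0 at *
  generalize th3 ((w + d + 1) / (2 * r)) (τ / 2) = A3 at *
  generalize th0 ((d - w + 1) / (2 * r)) (τ / 2) = B0 at *
  generalize th3 ((d - w + 1) / (2 * r)) (τ / 2) = B3 at *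
  generalize th0 ((-w + d - 1) / (2 * r)) (τ / 2) = C0 at *
  generalize th3 ((-w + d - 1) / (2 * r)) (τ / 2) = C3 at *
  generalize th0 ((w + d - 1) / (2 * r)) (τ / 2) = D0 at *
  generalize th3 ((w + d - 1) / (2 * r)) (τ / 2) = D3 at *
  by_cases n3 : br τ r w = 0
  · simp [n3]
  by_cases n4 : br τ r (w + 1) = 0
  · simp [n4]
  have n5 := hbr d (by omega)
  push_cast
  push_cast at n1 n2 E1 E2
  field_simp
  generalize br τ r (d + 1) = X at *
  generalize br τ r (d - 1) = Y at *
  linear_combination (-Y * Cc τ r ^ 4) * E1 + (-X * Cc τ r ^ 4) * E2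

theorem D2 (w : ℂ) (d : ℤ) (s : ℤ) (hs : IsS s) :
    psiStar τ r (w + 1) 1 (d + s) d * psiStar τ r w (-1) (d + s + s) (d + s)
    = psiStar τ r (w + 1) (-1) (d + s) d * psiStar τ r w 1 (d + s + s) (d + s) := by
  simp only [psiStar, psi, neg_neg, show ¬ ((-1 : ℤ) = 1) by norm_num, if_true, if_false]
  rw [show (((d + s + s : ℤ) : ℂ) - (d + s : ℤ)) * (w - 1) + ((d + s + s : ℤ) : ℂ) =
    (((d + s : ℤ) : ℂ) - d) * (w + 1 - 1) + ((d + s : ℤ) : ℂ) by push_cast; ring]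
  push_cast
  ring

theorem PSl_perm (hτ : 0 < τ.im) (hr : 0 < r) (h : Br3 (br τ r)) (hbr : ∀ s : ℤ, 0 < s → br τ r (s : ℂ) ≠ 0)
    (u : ℂ) (c : ℤ) {l1 l2 : List Bool} (hp : l1.Perm l2) : ∀ d : ℤ, (l1.length : ℤ) < d →
    PSl τ r u l1 d c = PSl τ r u l2 d c := by
  induction hp with
  | nil => intros; rfl
  | cons x hp ih =>
    intro d hd
    simp only [List.length_cons] at hd
    push_cast at hd
    simp only [PSl, hp.length_eq]
    rw [ih _ (by omega), ih _ (by omega)]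
  | trans h1 h2 ih1 ih2 =>
    intro d hd
    rw [ih1 d hd, ih2 d (by rw [← h1.length_eq]; exact hd)]
  | swap x y t =>
    intro d hd
    simp only [List.length_cons] at hd
    push_cast at hd
    have key : PSl τ r u (true :: false :: t) d c = PSl τ r u (false :: true :: t) d c := by
      simp only [PSl, List.length_cons, sg, Bool.false_eq_true, if_true, if_false, sub_add_cancel, add_sub_cancel_right]
      push_cast
      rw [← add_assoc u]
      have E := Dsym hτ hr h hbr (u + t.length) d (by omega)
      have E1 := D2 (τ := τ) (r := r) (u + t.length) d 1 (Or.inl rfl)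
      have E2 := D2 (τ := τ) (r := r) (u + t.length) d (-1) (Or.inr rfl)
      simp only [← sub_eq_add_neg] at E2
      linear_combination PSl τ r u t d c * E + PSl τ r u t (d + 1 + 1) c * E1 + PSl τ r u t (d - 1 - 1) c * E2
    cases x <;> cases y
    · rfl
    · exact key
    · exact key.symm
    · rfl

theorem sgsum (l : List Bool) : (l.map sg).sum = 2 * (l.count true : ℤ) - l.length := by
  induction l with
  | nil => simp
  | cons x t ih => cases x <;> simp [ih, sg] <;> ring

theorem permSg (l1 l2 : List Bool) (hl : l1.length = l2.length) (hs : (l1.map sg).sum = (l2.map sg).sum) : l1.Perm l2 := by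
  rw [sgsum, sgsum] at hs
  have ht : l1.count true = l2.count true := by omega
  rw [List.perm_iff_count]
  intro b
  cases b
  · have e1 : l1.count false + l1.count true = l1.length := List.count_not_add_count l1 true
    have e2 : l2.count false + l2.count true = l2.length := List.count_not_add_count l2 true
    omega
  · exact ht

def srt (k : ℕ) (m : ℤ) : Fin k → Bool := fun j => decide (((j : ℕ) + 1 : ℤ) ≤ m)

theorem srt_sum (k : ℕ) (m : ℤ) (h0 : 0 ≤ m) (h1 : m ≤ k) : ∑ j, sg (srt k m j) = 2 * m - k := by
  induction k generalizing m with
  | zero => simp; push_cast at h1; omega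
  | succ k ih =>
    rw [Fin.sum_univ_castSucc]
    push_cast at h1
    rcases eq_or_lt_of_le h1 with h | h
    · have := ih k (by omega) (by omega)
      have e : ∀ j : Fin k, srt (k + 1) m j.castSucc = srt k k j := by
        intro j; simp only [srt, Fin.val_castSucc]; congr 1; apply propext
        have := j.2
        constructor <;> intro <;> omega
      simp only [e, this]
      have : srt (k + 1) m (Fin.last k) = true := by simp [srt]; omega
      rw [this]; simp [sg]; omega
    · have := ih m (by omega) (by omega)
      have e : ∀ j : Fin k, srt (k + 1) m j.castSucc = srt k m j := by
        intro j; rfl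
      simp only [e, this]
      have : srt (k + 1) m (Fin.last k) = false := by simp [srt]; omega
      rw [this]; simp [sg]; omega

theorem Lk_eq (hτ : 0 < τ.im) (hr : 0 < r) (h : Br3 (br τ r)) (hbr : ∀ s : ℤ, 0 < s → br τ r (s : ℂ) ≠ 0)
    {M : ℤ} (k : ℕ) (u : ℂ) (a b c d : ℤ) (hc : ok M k c) : Lk τ r k u a b c d = Fu M (Lw τ r) u k a b c d := by
  by_cases hab : adm k a b
  swap
  · rw [Fu_top hab]; simp [Lk, psiF, hab]
  by_cases hcd : adm k c d
  swap
  · rw [Fu_bot Lw_BA hcd]; simp [Lk, psiStarF, hcd]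
  rw [Fu_Lw u k a b c d hab hc, Lk]
  have hS : ∀ i ∈ Finset.range (k + 1), psiStarF τ r k ((k : ℤ) - 2 * (i : ℤ)) u d c * psiF τ r k ((k : ℤ) - 2 * (i : ℤ)) u a b
     = ∑ ε : Fin k → Bool, if (∑ j, sg (ε j)) = (k : ℤ) - 2 * i then PSl τ r u (List.ofFn ε) c d * Pl τ r u (List.ofFn ε) a b else 0 := by
    intro i hi
    rw [Finset.mem_range] at hi
    have e1 : psiStarF τ r k ((k : ℤ) - 2 * (i : ℤ)) u d c = PSl τ r u (List.ofFn (srt k (((k : ℤ) + (k - 2 * i)) / 2))) c d := by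
      rw [← PS_eq, psiStarF, if_pos hcd, Finset.sum_filter]
      apply Finset.sum_congr rfl
      intro δ _
      split_ifs
      · apply Finset.prod_congr rfl
        intro j _
        congr 1
        simp only [srt, sg, decide_eq_true_eq]
      · rfl
    rw [e1, psiF, if_pos hab, Finset.mul_sum, Finset.sum_filter]
    apply Finset.sum_congr rfl
    intro ε _
    split_ifs with hε
    · rw [Pl_eq _ _ _ _ hab]
      congr 1
      apply PSl_perm hτ hr h hbr
      · apply permSg
        · simp
        · rw [List.map_ofFn, List.map_ofFn, List.sum_ofFn, List.sum_ofFn]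
          have := srt_sum k (((k : ℤ) + (k - 2 * i)) / 2) (by omega) (by omega)
          simp only [Function.comp]
          rw [this, hε]; omega
      · simp; exact hc.1
    · rfl
  rw [Finset.sum_congr rfl hS, Finset.sum_comm]
  apply Finset.sum_congr rfl
  intro ε _
  have hε : (∑ j, sg (ε j)) = 2 * (((List.ofFn ε).count true : ℕ) : ℤ) - k := by
    have := sgsum (List.ofFn ε)
    rw [List.map_ofFn, List.sum_ofFn] at this
    simpa using this
  have hle : (List.ofFn ε).count true ≤ k := by simpa using List.count_le_length (a := true) (l := List.ofFn ε)
  rw [Finset.sum_eq_single (k - (List.ofFn ε).count true)]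
  · rw [if_pos]; rw [hε]; omega
  · intro i _ hi
    rw [if_neg]; rw [hε]; omega
  · intro hh
    exfalso; apply hh; simp

end
end

section
section
variable {τ : ℂ} {r : ℝ}

theorem piCons {n : ℕ} (S : Finset ℤ) (F : (Fin (n + 1) → ℤ) → ℂ) :
    ∑ f ∈ Fintype.piFinset (fun _ : Fin (n + 1) => S), F f =
    ∑ x ∈ S, ∑ f ∈ Fintype.piFinset (fun _ : Fin n => S), F (Fin.cons x f) := by
  rw [← Finset.sum_product']
  apply Finset.sum_nbij' (fun f => (f 0, Fin.tail f)) (fun p => Fin.cons p.1 p.2)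
  · intro f hf
    simp only [Fintype.mem_piFinset, Finset.mem_product] at *
    exact ⟨hf 0, fun i => hf i.succ⟩
  · rintro ⟨x, f⟩ hf
    simp only [Fintype.mem_piFinset, Finset.mem_product] at *
    intro i
    refine Fin.cases ?_ ?_ i
    · exact hf.1
    · intro j; exact hf.2 j
  · intro f _; simp
  · rintro ⟨x, f⟩ _; simp
  · intro f _; simp

theorem seq_zero (k : ℕ) (d c : ℤ) (f : Fin (k - 1) → ℤ) : seqI k d c f 0 = d := by simp [seqI]

theorem seq_cons (n : ℕ) (d c x : ℤ) (f : Fin n → ℤ) (j : ℕ) :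
    seqI (n + 2) d c (Fin.cons x f : Fin (n + 1) → ℤ) (j + 1) = seqI (n + 1) x c f j := by
  unfold seqI
  rw [dif_neg (by omega)]
  by_cases h0 : j = 0
  · subst h0; simp
  · rw [dif_neg h0]
    by_cases h1 : j < n + 1
    · rw [dif_pos h1, dif_pos (by omega)]
      obtain ⟨i, rfl⟩ := Nat.exists_eq_succ_of_ne_zero h0
      have : (⟨i.succ + 1 - 1, by omega⟩ : Fin (n + 1)) = Fin.succ ⟨i, by omega⟩ := rfl
      exact Fin.cons_succ (α := fun _ => ℤ) x f ⟨i, by omega⟩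
    · rw [dif_neg h1, dif_neg (by omega)]

theorem FS {M : ℤ} {X : Wt} (hX : BA X) (u : ℂ) (n : ℕ) (a b d c : ℤ) (hab : adm (n + 1) a b) (hd : ok M (n + 1) d) :
    ∑ f ∈ Fintype.piFinset (fun _ : Fin n => Finset.Ioo 0 M), ∏ j ∈ Finset.range (n + 1),
      X (u + ((n + 1 : ℕ) : ℂ) - ((j : ℂ) + 1))
        (cpathZ a ((((n + 1 : ℕ) : ℤ) - (a - b)) / 2) j) (cpathZ a ((((n + 1 : ℕ) : ℤ) - (a - b)) / 2) (j + 1))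
        (seqI (n + 1) d c f j) (seqI (n + 1) d c f (j + 1)) = Fu M X u (n + 1) a b d c := by
  induction n generalizing a d with
  | zero =>
    have hb : nx 0 a b = b := by
      have := nx_adm 0 a b hab
      unfold adm at this; omega
    rw [Fu, if_pos hab, hb]
    have e1 := cp_shift 0 a b hab 0
    rw [cp_zero _ _ _ (nx_adm 0 a b hab), hb] at e1
    have e0 := cp_zero _ _ _ hab
    simp at e0 e1
    simp [seqI, Fu, e0, e1]
    intro h
    apply hX
    unfold ok at hd; unfold Adj; push_cast at *; omega
  | succ n ih =>
    rw [Fu, if_pos hab, piCons]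
    apply Finset.sum_congr rfl
    intro x _
    by_cases hx : Adj d x
    swap
    · rw [hX _ _ _ _ _ hx, zero_mul]
      apply Finset.sum_eq_zero
      intro f _
      apply Finset.prod_eq_zero (Finset.mem_range.mpr (show 0 < n + 1 + 1 by omega))
      apply hX
      rwa [seq_cons, seq_zero, seq_zero]
    rw [← ih _ _ (nx_adm _ a b hab) (by unfold ok at *; unfold Adj at *; push_cast at *; omega), Finset.mul_sum]
    apply Finset.sum_congr rfl
    intro f _
    rw [Finset.prod_range_succ', mul_comm]
    congr 1
    · rw [cp_shift _ _ _ hab, cp_zero _ _ _ hab, cp_zero _ _ _ (nx_adm _ a b hab), seq_cons, seq_zero, seq_zero]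
      congr 1; push_cast; ring
    · apply Finset.prod_congr rfl
      intro j _
      rw [cp_shift _ _ _ hab, cp_shift _ _ _ hab, seq_cons, seq_cons]
      congr 1; push_cast; ring

theorem TS {M : ℤ} {X : Wt} (hX : BA X) (u : ℂ) (n : ℕ) (a b d c : ℤ) (hab : adm (n + 1) a b) (hd : ok M (n + 1) d) :
    ∑' f : Fin n → ℤ, ∏ j ∈ Finset.range (n + 1),
      X (u + ((n + 1 : ℕ) : ℂ) - ((j : ℂ) + 1))
        (cpathZ a ((((n + 1 : ℕ) : ℤ) - (a - b)) / 2) j) (cpathZ a ((((n + 1 : ℕ) : ℤ) - (a - b)) / 2) (j + 1))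
        (seqI (n + 1) d c f j) (seqI (n + 1) d c f (j + 1)) = Fu M X u (n + 1) a b d c := by
  rw [← FS hX u n a b d c hab hd]
  apply tsum_eq_sum
  intro f hf
  by_contra hne
  have hne := Finset.prod_ne_zero_iff.mp hne
  have hadj : ∀ j < n + 1, Adj (seqI (n + 1) d c f j) (seqI (n + 1) d c f (j + 1)) := by
    intro j hj
    by_contra h
    exact hne j (Finset.mem_range.mpr hj) (hX _ _ _ _ _ h)
  have hb : ∀ j ≤ n + 1, d - j ≤ seqI (n + 1) d c f j ∧ seqI (n + 1) d c f j ≤ d + j := by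
    intro j
    induction j with
    | zero => intro _; rw [seq_zero]; simp
    | succ j ih =>
      intro hj
      have h1 := ih (by omega)
      have h2 := hadj j (by omega)
      unfold Adj at h2; push_cast; omega
  apply hf
  rw [Fintype.mem_piFinset]
  intro i
  have h1 := hb (i + 1) (by omega)
  have h2 : seqI (n + 1) d c f (i + 1) = f i := by
    unfold seqI
    rw [dif_neg (by omega), dif_pos (by omega)]; rfl
  rw [h2] at h1
  rw [Finset.mem_Ioo]
  unfold ok at hd
  have := i.2
  push_cast at *
  omega

theorem Fu_congr {M : ℤ} {X Y : Wt} (hX : BA X) (hY : BA Y) (u : ℂ) (m n : ℕ)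
    (h : ∀ j < n, ∀ a b d c, ok M m d → Adj d c → X (u + (j : ℕ)) a b d c = Y (u + (j : ℕ)) a b d c) :
    ∀ a b d c, ok M (n + m) d → Fu M X u n a b d c = Fu M Y u n a b d c := by
  induction n with
  | zero => intros; rfl
  | succ n ih =>
    intro a b d c hd
    simp only [Fu]
    split_ifs
    · apply Finset.sum_congr rfl
      intro x _
      by_cases hx : Adj d x
      · rw [h n (by omega) _ _ _ _ (by unfold ok at *; push_cast at *; omega) hx,
          ih (fun j hj => h j (by omega)) _ _ _ _ (by unfold ok at *; unfold Adj at *; push_cast at *; omega)]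
      · rw [hX _ _ _ _ _ hx, hY _ _ _ _ _ hx, zero_mul, zero_mul]
    · rfl

theorem Wb_z {w : ℂ} {a b d c : ℤ} (h : ¬ (Adj a b ∧ Adj a d ∧ Adj b c ∧ Adj d c)) : Wb τ r w a b d c = 0 := by
  unfold Adj at h
  unfold Wb
  rw [if_neg (by omega), if_neg (by omega), if_neg (by omega), if_neg (by omega), if_neg (by omega),
    if_neg (by omega)]

theorem Wk1_adj (k : ℕ) (hk : 1 ≤ k) (u : ℂ) (a b d c : ℤ) (h : ¬ Adj a d) : Wk1 τ r k u a b d c = 0 := by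
  unfold Wk1
  split_ifs with hab
  · have : ∀ f : Fin (k - 1) → ℤ, (∏ j ∈ Finset.range k,
        Wb τ r (u + (k : ℂ) - ((j : ℂ) + 1))
          (cpathZ a (((k : ℤ) - (a - b)) / 2) j)
          (cpathZ a (((k : ℤ) - (a - b)) / 2) (j + 1))
          (seqI k d c f j) (seqI k d c f (j + 1))) = 0 := by
      intro f
      apply Finset.prod_eq_zero (Finset.mem_range.mpr (show 0 < k by omega))
      rw [cp_zero _ _ _ hab, seq_zero]
      exact Wb_z (by tauto)
    simp only [this, tsum_zero]
  · rfl

theorem Wk1_eq {M : ℤ} (k : ℕ) (hk : 1 ≤ k) (u : ℂ) (a b d c : ℤ) (hd : ok M k d)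
    (hu : ∀ j < k, br τ r (1 + (u + (j : ℕ))) ≠ 0) : Wk1 τ r k u a b d c = Fu M (Wp τ r) u k a b d c := by
  by_cases hab : adm k a b
  swap
  · rw [Fu_top hab]; simp [Wk1, hab]
  have hB : BA (Wb τ r) := fun w a b d c h => Wb_z (by tauto)
  rw [Wk1, if_pos hab, ← Fu_congr hB Wp_BA u 0 k _ a b d c (by simpa using hd)]
  · obtain ⟨n, rfl⟩ := Nat.exists_eq_add_of_le' hk
    exact TS hB u n a b d c hab hd
  · intro j hj a b d c _ _
    simp only [Wp, hu j hj, if_false]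

theorem Wkl_eq {M : ℤ} (k l : ℕ) (hk : 1 ≤ k) (hl : 1 ≤ l) (u v : ℂ) (a b d c : ℤ) (ha : ok M (l + (k + 1)) a)
    (huv1 : ∀ j : ℤ, |j| ≤ (k : ℤ) + l → br τ r (1 + u - v + (j : ℂ)) ≠ 0) :
    Wkl τ r k l (u - v) a b d c = Fu M (fun w b b' a a' => Fu M (Wp τ r) (u - w) k a b a' b') v l b c a d := by
  by_cases hbc : adm l b c
  swap
  · rw [Fu_top hbc]; simp [Wkl, hbc]
  have hB : BA (fun w b b' a a' => Wk1 τ r k (u - w) a b a' b') := fun w a b d c h => Wk1_adj k hk _ _ _ _ _ h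
  have hB2 : BA (fun w b b' a a' => Fu M (Wp τ r) (u - w) k a b a' b') := by
    intro w b b' a a' h
    exact Fu_left' Wp_LRA hk h
  rw [Wkl, if_pos hbc, ← Fu_congr hB hB2 v (k + 1) l _ b c a d ha]
  · obtain ⟨n, rfl⟩ := Nat.exists_eq_add_of_le' hl
    have := TS (M := M) hB v n b c a d hbc (by unfold ok at *; push_cast at *; omega)
    rw [← this]
    apply tsum_congr
    intro f
    apply Finset.prod_congr rfl
    intro j _
    congr 1; push_cast; ring
  · intro j hj a b d c hd hdc
    apply Wk1_eq k hk
    · unfold ok at *; unfold Adj at *; push_cast at *; omega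
    · intro i hi
      have := huv1 (i - j) (by rw [abs_le]; omega)
      convert this using 2
      push_cast; ring

end
end

/-- Yang-Baxter relation for the elliptic 6j-symbols. -/
theorem sixj_yang_baxter (τ : ℂ) (r : ℝ) (hτ : 0 < τ.im) (hr : 0 < r) (hirr : Irrational r)
    (k l : ℕ) (hk : 1 ≤ k) (hl : 1 ≤ l)
    (a b c e f g : ℤ)
    (hab : (a - b).natAbs ≤ k ∧ (a - b - (k : ℤ)) % 2 = 0)
    (hfe : (f - e).natAbs ≤ k ∧ (f - e - (k : ℤ)) % 2 = 0)
    (hbc : (b - c).natAbs ≤ l ∧ (b - c - (l : ℤ)) % 2 = 0)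
    (hgf : (g - f).natAbs ≤ l ∧ (g - f - (l : ℤ)) % 2 = 0)
    (hpos : 2 * ((k : ℤ) + l) < a ∧ 2 * ((k : ℤ) + l) < b ∧ 2 * ((k : ℤ) + l) < c ∧
      2 * ((k : ℤ) + l) < e ∧ 2 * ((k : ℤ) + l) < f ∧ 2 * ((k : ℤ) + l) < g)
    (u v : ℂ)
    (hbr : ∀ s : ℤ, 0 < s → br τ r (s : ℂ) ≠ 0)
    (hu : ∀ j : ℤ, |j| ≤ (k : ℤ) + l → br τ r (u + (j : ℂ)) ≠ 0)
    (hv : ∀ j : ℤ, |j| ≤ (k : ℤ) + l → br τ r (v + (j : ℂ)) ≠ 0)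
    (huv : ∀ j : ℤ, |j| ≤ (k : ℤ) + l → br τ r (u - v + (j : ℂ)) ≠ 0)
    (huv1 : ∀ j : ℤ, |j| ≤ (k : ℤ) + l → br τ r (1 + u - v + (j : ℂ)) ≠ 0) :
    {d : ℤ | Wkl τ r k l (u - v) a b d c * Lk τ r k u d c f e *
        Lk τ r l v a d g f ≠ 0}.Finite ∧
    {d : ℤ | Lk τ r k u a b g d * Lk τ r l v b c d e *
        Wkl τ r k l (u - v) g d f e ≠ 0}.Finite ∧
    (∑' d : ℤ, Wkl τ r k l (u - v) a b d c * Lk τ r k u d c f e * Lk τ r l v a d g f) =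
      ∑' d : ℤ, Lk τ r k u a b g d * Lk τ r l v b c d e * Wkl τ r k l (u - v) g d f e := by
  have h1 : br τ r 1 ≠ 0 := by simpa using hbr 1 (by norm_num)
  have h := br3 τ r hτ hr h1
  obtain ⟨M, hM⟩ : ∃ M : ℤ, M = a + b + c + e + f + g + 2 * (k + l) + 1 := ⟨_, rfl⟩
  have ka : ok M (2 * k + 2 * l) a := by unfold ok; push_cast; omega
  have kb : ok M (2 * k + 2 * l) b := by unfold ok; push_cast; omega
  have kg : ok M (2 * k + 2 * l) g := by unfold ok; push_cast; omega
  have kf : ok M (2 * k + 2 * l) f := by unfold ok; push_cast; omega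
  have main := abstractYB k l hk hl (Wp_BA (τ := τ) (r := r)) (Wp_Ex h hbr M) Wp_LRA (Wp_RE h hbr M)
    Lw_BA (Lw_Ex hτ hr h hbr M) Lw_t (fun u v a b g f c e => YB1 hτ hr h hbr M u v a b g f c e) u v a b c e f g
    ka kb kg (by rw [Finset.mem_Ioo]; omega) (by rw [Finset.mem_Ioo]; omega) (by rw [Finset.mem_Ioo]; omega)
  have okm : ∀ {n m : ℕ} {x : ℤ}, ok M n x → m ≤ n → ok M m x := by
    intro n m x hx hm; unfold ok at *; omega
  have z1 : ∀ d, ¬ adm l a d → Lk τ r l v a d g f = 0 := by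
    intro d hd; rw [Lk_eq hτ hr h hbr l v a d g f (okm kg (by omega)), Fu_top hd]
  have z2 : ∀ d, ¬ adm k g d → Lk τ r k u a b g d = 0 := by
    intro d hd; rw [Lk_eq hτ hr h hbr k u a b g d (okm kg (by omega)), Fu_bot Lw_BA hd]
  have q1 : ∀ d, Wkl τ r k l (u - v) a b d c * Lk τ r k u d c f e * Lk τ r l v a d g f =
      Fu M (fun w b b' a a' => Fu M (Wp τ r) (u - w) k a b a' b') v l b c a d * Fu M (Lw τ r) u k d c f e *
        Fu M (Lw τ r) v l a d g f := by
    intro d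
    rw [Wkl_eq k l hk hl u v a b d c (okm ka (by omega)) huv1, Lk_eq hτ hr h hbr k u d c f e (okm kf (by omega)),
      Lk_eq hτ hr h hbr l v a d g f (okm kg (by omega))]
  have q2 : ∀ d, Lk τ r k u a b g d * Lk τ r l v b c d e * Wkl τ r k l (u - v) g d f e =
      Fu M (Lw τ r) u k a b g d * Fu M (Lw τ r) v l b c d e *
      Fu M (fun w b b' a a' => Fu M (Wp τ r) (u - w) k a b a' b') v l d e g f := by
    intro d
    by_cases hd : adm k g d
    · rw [Wkl_eq k l hk hl u v g d f e (okm kg (by omega)) huv1, Lk_eq hτ hr h hbr k u a b g d (okm kg (by omega)),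
        Lk_eq hτ hr h hbr l v b c d e (M := M) (by unfold ok adm at *; push_cast at *; omega)]
    · rw [z2 d hd, Fu_bot Lw_BA hd]; simp
  have i1 : ∀ d, adm l a d → d ∈ Finset.Ioo 0 M := by
    intro d hd; rw [Finset.mem_Ioo]; unfold ok adm at *; push_cast at *; omega
  have i2 : ∀ d, adm k g d → d ∈ Finset.Ioo 0 M := by
    intro d hd; rw [Finset.mem_Ioo]; unfold ok adm at *; push_cast at *; omega
  refine ⟨?_, ?_, ?_⟩
  · apply (Finset.Ioo 0 M).finite_toSet.subset
    intro d hd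
    by_contra hn
    apply hd
    rw [z1 d (fun hh => hn (i1 d hh)), mul_zero]
  · apply (Finset.Ioo 0 M).finite_toSet.subset
    intro d hd
    by_contra hn
    apply hd
    rw [z2 d (fun hh => hn (i2 d hh)), zero_mul, zero_mul]
  · rw [tsum_eq_sum (s := Finset.Ioo 0 M), tsum_eq_sum (s := Finset.Ioo 0 M)]
    · simp only [q1, q2]
      exact main
    · intro d hn
      rw [z2 d (fun hh => hn (i2 d hh)), zero_mul, zero_mul]
    · intro d hn
      rw [z1 d (fun hh => hn (i1 d hh)), mul_zero]

end Ell
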